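/- arXiv:1902.03641 — 2 statements merged into one kernel-verified Lean document; each statement's English description precedes it below -/
import Mathlib

section
/- Let K be any field, let F be a totally looped finite graph with F^0 = {v_1, ..., v_t}, let n_1, ..., n_t be positive integers, and let E denote the hair extension graph F^+(n_1, ..., n_t). Let Q be a nonzero finitely generated projective left L_K(E)-module. Then there exist a hereditary subset T = {v_{j_1}, ..., v_{j_u}} of F^0 and positive integers m_1, ..., m_u such that Q ≅ ⊕_{i=1}^u m_i · L_K(E) v_{j_i} as left L_K(E)-modules (where m · M denotes the direct sum of m copies of M). -/
/-!
Every finitely generated projective `L_K(G)`-module is a direct sum of vertex modules `L_K(G) v`, for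
any finite graph `G`, and the totally looped hypothesis allows one to rearrange such a sum so that its
set of vertices is hereditary.

The first statement rests on a Gröbner basis argument in the ghost path algebra, the span of the
ghost paths in `L = L_K(G)`. These are linearly independent, as is seen from a representation given by
a branching system (`exists_separating`). In a free module `L^ι`, the products of ghost paths with
standard basis vectors are the nodes of a forest, and they are well-ordered compatibly with left
multiplication by ghost edges (`exists_rank`), so that nonzero vectors over the ghost path algebra
have leading nodes. An exhaustive filtration `fil` of `L`, whose levels are linked by left
multiplication with ghost edges, reduces everything to the ghost path algebra: a finitely generated
submodule of `L^ι` is generated by vectors over the ghost path algebra, each fixed by some vertex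
(`exists_good_gens`). Cancelling leading nodes makes these generators reduced (`exists_reduced`):
no leading node is a descendant of another one. In a forest this means that the ghost multiples of
the generators have distinct leading nodes, so the generators are independent over the ghost path
algebra, and by the filtration over `L` (`indep`). Hence the submodule is the direct sum of the vertex
modules of the vertices fixing the generators (`exists_equiv_of_fg`); projective modules embed into
free modules.

In the hair extension, the vertex modules along a strand are isomorphic to that of the vertex of `F`
it is attached to (`strand_equiv`), so only vertices of `F` are needed. For regular `v` one has
`L v ≅ ⊕ L r(e)` over the edges leaving `v` (`equivOut`), and `v` occurs on the right because of its
loop; thus expanding all summands keeps the vertices that occur and adds their out-neighbours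
(`exists_expansion`). A decomposition with the largest possible set of vertices then has a hereditary
set.
-/

/-! ## Finite directed graphs -/

structure FinGraph where
  V : Type
  E : Type
  [fintypeV : Fintype V]
  [fintypeE : Fintype E]
  [decEqV : DecidableEq V]
  [decEqE : DecidableEq E]
  s : E → V
  r : E → V

attribute [instance] FinGraph.fintypeV FinGraph.fintypeE FinGraph.decEqV FinGraph.decEqE

namespace FinGraph

/-- A vertex is regular if it emits at least one edge. -/
def IsRegular (G : FinGraph) (v : G.V) : Prop := ∃ e : G.E, G.s e = v

/-- A sink emits no edges. -/
def IsSink (G : FinGraph) (v : G.V) : Prop := ∀ e : G.E, G.s e ≠ v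

/-- A source receives no edges. -/
def IsSource (G : FinGraph) (v : G.V) : Prop := ∀ e : G.E, G.r e ≠ v

/-- A graph is totally looped if every regular vertex is the base of a loop. -/
def TotallyLooped (G : FinGraph) : Prop :=
  ∀ v : G.V, G.IsRegular v → ∃ e : G.E, G.s e = v ∧ G.r e = v

/-- A set of vertices is hereditary if it is closed under ranges of edges emitted
from its elements (equivalently, under reachability by paths). -/
def Hereditary (G : FinGraph) (T : Finset G.V) : Prop :=
  ∀ e : G.E, G.s e ∈ T → G.r e ∈ T

/-- A set of vertices `H` is saturated if every regular vertex all of whose emitted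
edges end in `H` belongs to `H`. -/
def Saturated (G : FinGraph) (H : Set G.V) : Prop :=
  ∀ v : G.V, G.IsRegular v → (∀ e : G.E, G.s e = v → G.r e ∈ H) → v ∈ H

/-- The trivial graph: one vertex, no edges. -/
def IsTrivial (G : FinGraph) : Prop :=
  Nonempty G.V ∧ Subsingleton G.V ∧ IsEmpty G.E

/-- A graph is source-free if every vertex receives at least one edge. -/
def IsSourceFree (G : FinGraph) : Prop := ∀ v : G.V, ∃ e : G.E, G.r e = v

/-- The graph with `k` vertices and no edges. -/
def discrete (k : ℕ) : FinGraph where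
  V := Fin k
  E := Empty
  s := Empty.elim
  r := Empty.elim

/-- The straight line graph `A_n` with `n` vertices `v_0, …, v_{n-1}` and
edges `v_{i+1} → v_i` for `0 ≤ i ≤ n-2`. -/
def line (n : ℕ) : FinGraph where
  V := Fin n
  E := Fin (n - 1)
  s := fun i => ⟨i.1 + 1, by have := i.isLt; omega⟩
  r := fun i => ⟨i.1, by have := i.isLt; omega⟩

/-- Disjoint union of two graphs. -/
def disjUnion (G H : FinGraph) : FinGraph where
  V := G.V ⊕ H.V
  E := G.E ⊕ H.E
  s := Sum.map G.s H.s
  r := Sum.map G.r H.r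

/-- The restriction graph of `G` to a hereditary set `T` of vertices. -/
def restrict (G : FinGraph) (T : Finset G.V) (hT : G.Hereditary T) : FinGraph where
  V := {v : G.V // v ∈ T}
  E := {e : G.E // G.s e ∈ T}
  s := fun e => ⟨G.s e.1, e.2⟩
  r := fun e => ⟨G.r e.1, hT e.1 e.2⟩

/-- The "strands of hair" extension `F⁺(n)` of `F`:  at each vertex `v` a strand
`v^{n v - 1} → ⋯ → v^1 → v` of length `n v - 1` is attached. -/
def hairExtension (F : FinGraph) (n : F.V → ℕ) : FinGraph where
  V := F.V ⊕ (Σ v : F.V, Fin (n v - 1))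
  E := F.E ⊕ (Σ v : F.V, Fin (n v - 1))
  s := Sum.elim (fun e => Sum.inl (F.s e)) (fun p => Sum.inr p)
  r := Sum.elim (fun e => Sum.inl (F.r e))
    (fun p => if h : (p.2 : ℕ) = 0 then Sum.inl p.1
      else Sum.inr ⟨p.1, ⟨(p.2 : ℕ) - 1, by have := p.2.isLt; omega⟩⟩)

/-- The "Move (R)" graph at a vertex `w` which emits precisely one edge `f`
which is not a loop: `w` is removed, and each edge `e` into `w` is replaced by
an edge `[ef]` from `s e` to `r f`. -/
def moveR (E : FinGraph) (w : E.V) (f : E.E)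
    (hsf : E.s f = w) (huniq : ∀ e : E.E, E.s e = w → e = f) (hnl : E.r f ≠ w) : FinGraph where
  V := {v : E.V // v ≠ w}
  E := {e : E.E // E.r e ≠ w ∧ e ≠ f} ⊕ {e : E.E // E.r e = w}
  s := Sum.elim
    (fun e => ⟨E.s e.1, fun h => e.2.2 (huniq e.1 h)⟩)
    (fun e => ⟨E.s e.1, fun h => hnl ((huniq e.1 h) ▸ e.2)⟩)
  r := Sum.elim
    (fun e => ⟨E.r e.1, e.2.1⟩)
    (fun _ => ⟨E.r f, hnl⟩)

/-- The collapse of `E` at a vertex `v` which is not the base of a loop: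
`v` is removed, and for every `e ∈ r⁻¹(v)` and `f ∈ s⁻¹(v)` an edge `[ef]`
from `s e` to `r f` is added. -/
def collapse (E : FinGraph) (v : E.V)
    (hnl : ∀ e : E.E, E.s e = v → E.r e ≠ v) : FinGraph where
  V := {u : E.V // u ≠ v}
  E := {e : E.E // E.r e ≠ v ∧ E.s e ≠ v} ⊕ ({e : E.E // E.r e = v} × {f : E.E // E.s f = v})
  s := Sum.elim
    (fun e => ⟨E.s e.1, e.2.2⟩)
    (fun p => ⟨E.s p.1.1, fun h => (hnl p.1.1 h) p.1.2⟩)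
  r := Sum.elim
    (fun e => ⟨E.r e.1, e.2.1⟩)
    (fun p => ⟨E.r p.2.1, hnl p.2.1 p.2.2⟩)

/-- The in-split graph of `E` at a vertex `v`, with respect to a partition of
`r⁻¹(v)` into `n` classes (encoded as a surjection `P : r⁻¹(v) → Fin n`). -/
def inSplit (E : FinGraph) (v : E.V) (n : ℕ) (P : {e : E.E // E.r e = v} → Fin n) : FinGraph where
  V := {u : E.V // u ≠ v} ⊕ Fin n
  E := ({e : E.E // E.s e = v} × Fin n) ⊕ {f : E.E // E.s f ≠ v}
  s := Sum.elim (fun x => Sum.inr x.2) (fun f => Sum.inl ⟨E.s f.1, f.2⟩)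
  r := Sum.elim
    (fun x => if h : E.r x.1.1 = v then Sum.inr (P ⟨x.1.1, h⟩) else Sum.inl ⟨E.r x.1.1, h⟩)
    (fun f => if h : E.r f.1 = v then Sum.inr (P ⟨f.1, h⟩) else Sum.inl ⟨E.r f.1, h⟩)

/-- The out-split graph of `E` at a vertex `v`, with respect to a partition of
`s⁻¹(v)` into `n` classes (encoded as a surjection `P : s⁻¹(v) → Fin n`). -/
def outSplit (E : FinGraph) (v : E.V) (n : ℕ) (P : {e : E.E // E.s e = v} → Fin n) : FinGraph where
  V := {u : E.V // u ≠ v} ⊕ Fin n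
  E := ({e : E.E // E.r e = v} × Fin n) ⊕ {f : E.E // E.r f ≠ v}
  r := Sum.elim (fun x => Sum.inr x.2) (fun f => Sum.inl ⟨E.r f.1, f.2⟩)
  s := Sum.elim
    (fun x => if h : E.s x.1.1 = v then Sum.inr (P ⟨x.1.1, h⟩) else Sum.inl ⟨E.s x.1.1, h⟩)
    (fun f => if h : E.s f.1 = v then Sum.inr (P ⟨f.1, h⟩) else Sum.inl ⟨E.s f.1, h⟩)

/-- The source elimination graph `E \ v` at a source `v`. -/
def sourceElim (E : FinGraph) (v : E.V) (hsrc : E.IsSource v) : FinGraph where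
  V := {u : E.V // u ≠ v}
  E := {e : E.E // E.s e ≠ v}
  s := fun e => ⟨E.s e.1, e.2⟩
  r := fun e => ⟨E.r e.1, fun h => hsrc e.1 h⟩

/-- A chain of source eliminations starting at `E`. -/
inductive ElimChain (E : FinGraph) : FinGraph → Type 1
  | refl : ElimChain E E
  | step {H : FinGraph} (c : ElimChain E H) (v : H.V) (hsrc : H.IsSource v) :
      ElimChain E (H.sourceElim v hsrc)

/-- The canonical (injective) map from the vertices of the final graph of a
source elimination chain back into the vertices of the initial graph. -/
def ElimChain.vmap {E : FinGraph} : {F : FinGraph} → ElimChain E F → F.V → E.V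
  | _, .refl, u => u
  | _, .step c _ _, u => c.vmap u.1

/-- A chain of collapses, each performed at a regular vertex which is not the
base of a loop. -/
inductive CollapseChain (E : FinGraph) : FinGraph → Prop
  | refl : CollapseChain E E
  | step {H : FinGraph} (c : CollapseChain E H) (v : H.V) (hreg : H.IsRegular v)
      (hnl : ∀ e : H.E, H.s e = v → H.r e ≠ v) :
      CollapseChain E (H.collapse v hnl)

end FinGraph

/-! ## Leavitt path algebras -/

/-- Generators of the Leavitt path algebra: vertices, edges, and ghost edges. -/
inductive LPAGen (G : FinGraph) : Type
  | vert : G.V → LPAGen G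
  | edge : G.E → LPAGen G
  | ghost : G.E → LPAGen G

/-- The defining relations of the Leavitt path algebra of a finite graph. -/
inductive LeavittRel (K : Type) [Field K] (G : FinGraph) :
    FreeAlgebra K (LPAGen G) → FreeAlgebra K (LPAGen G) → Prop
  | vertMul (v w : G.V) :
      LeavittRel K G (FreeAlgebra.ι K (LPAGen.vert v) * FreeAlgebra.ι K (LPAGen.vert w))
        (if v = w then FreeAlgebra.ι K (LPAGen.vert v) else 0)
  | edgeLeft (e : G.E) :
      LeavittRel K G (FreeAlgebra.ι K (LPAGen.vert (G.s e)) * FreeAlgebra.ι K (LPAGen.edge e))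
        (FreeAlgebra.ι K (LPAGen.edge e))
  | edgeRight (e : G.E) :
      LeavittRel K G (FreeAlgebra.ι K (LPAGen.edge e) * FreeAlgebra.ι K (LPAGen.vert (G.r e)))
        (FreeAlgebra.ι K (LPAGen.edge e))
  | ghostLeft (e : G.E) :
      LeavittRel K G (FreeAlgebra.ι K (LPAGen.vert (G.r e)) * FreeAlgebra.ι K (LPAGen.ghost e))
        (FreeAlgebra.ι K (LPAGen.ghost e))
  | ghostRight (e : G.E) :
      LeavittRel K G (FreeAlgebra.ι K (LPAGen.ghost e) * FreeAlgebra.ι K (LPAGen.vert (G.s e)))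
        (FreeAlgebra.ι K (LPAGen.ghost e))
  | ghostEdge (e f : G.E) :
      LeavittRel K G (FreeAlgebra.ι K (LPAGen.ghost e) * FreeAlgebra.ι K (LPAGen.edge f))
        (if e = f then FreeAlgebra.ι K (LPAGen.vert (G.r e)) else 0)
  | cuntzKrieger (v : G.V) (hv : G.IsRegular v) :
      LeavittRel K G (FreeAlgebra.ι K (LPAGen.vert v))
        (∑ e ∈ Finset.univ.filter (fun e : G.E => G.s e = v),
          FreeAlgebra.ι K (LPAGen.edge e) * FreeAlgebra.ι K (LPAGen.ghost e))
  | unit :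
      LeavittRel K G 1 (∑ v : G.V, FreeAlgebra.ι K (LPAGen.vert v))

/-- The Leavitt path algebra `L_K(G)` of a finite graph `G` with coefficients in
a field `K`. -/
abbrev LeavittPathAlgebra (K : Type) [Field K] (G : FinGraph) : Type :=
  RingQuot (LeavittRel K G)

namespace LeavittPathAlgebra

variable (K : Type) [Field K] (G : FinGraph)

/-- The image of a vertex in the Leavitt path algebra. -/
def vert (v : G.V) : LeavittPathAlgebra K G :=
  RingQuot.mkAlgHom K (LeavittRel K G) (FreeAlgebra.ι K (LPAGen.vert v))

/-- The image of an edge in the Leavitt path algebra. -/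
def edge (e : G.E) : LeavittPathAlgebra K G :=
  RingQuot.mkAlgHom K (LeavittRel K G) (FreeAlgebra.ι K (LPAGen.edge e))

/-- The image of a ghost edge in the Leavitt path algebra. -/
def ghost (e : G.E) : LeavittPathAlgebra K G :=
  RingQuot.mkAlgHom K (LeavittRel K G) (FreeAlgebra.ι K (LPAGen.ghost e))

end LeavittPathAlgebra

/-! ## Ring-theoretic notions -/

/-- Two unital rings are Morita equivalent if their categories of left modules
are equivalent. -/
def MoritaEquivalent (R S : Type) [Ring R] [Ring S] : Prop :=
  Nonempty (ModuleCat.{0} R ≌ ModuleCat.{0} S)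

/-- An idempotent `e` of a ring `R` is full if `R e R = R`, i.e. `1` is a finite
sum of elements of the form `a * e * b`. -/
def IsFullIdempotent {R : Type} [Ring R] (e : R) : Prop :=
  IsIdempotentElem e ∧ ∃ (n : ℕ) (a b : Fin n → R), (∑ i, a i * e * b i) = 1

/-- `S` is isomorphic, as a (nonunital) `K`-algebra, to the corner ring
`ε R ε = {x : R | ε * x * ε = x}` of `R`. -/
def IsCornerIso (K : Type) [Field K] (S R : Type) [Ring S] [Ring R]
    [Algebra K S] [Algebra K R] (ε : R) : Prop :=
  ∃ φ : S →ₙₐ[K] R, Function.Injective φ ∧ Set.range φ = {x : R | ε * x * ε = x}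

/-- A module `Q` is a generator for the category of left `R`-modules iff `R` is
an epimorphic image (equivalently, a direct summand) of a finite direct sum of
copies of `Q`. -/
def IsGenerator (R Q : Type) [Ring R] [AddCommGroup Q] [Module R Q] : Prop :=
  ∃ (n : ℕ) (f : (Fin n → Q) →ₗ[R] R), Function.Surjective f


/-! ### Ghost monomials and the filtration of the algebra -/

/-- The range of a path which starts at `v`. Paths are lists of edges with the last edge first, so
that the list `e :: l` is the path `l` followed by `e`; the base `v` is needed for the empty
path. -/
def pathEnd {G : FinGraph} (v : G.V) : List G.E → G.V
  | [] => v
  | e :: _ => G.r e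

/-- The list of edges `l`, last edge first, is a path starting at `v`. -/
def IsPathFrom {G : FinGraph} (v : G.V) : List G.E → Prop
  | [] => True
  | e :: l => IsPathFrom v l ∧ G.s e = pathEnd v l

/-- The product of the ghost edges `y e` of a list of edges. For a path this is the ghost path. -/
def ghostProd {G : FinGraph} {R : Type} [Ring R] (y : G.E → R) : List G.E → R
  | [] => 1
  | e :: l => y e * ghostProd y l

/-- The facts about `L_K(G)` used by the structure theory of its projective modules: elements
`p v`, `x e`, `y e` (vertices, edges, ghost edges) satisfying the defining relations, which generate
the algebra (in the form of an induction principle for left multiplication, `gen`), and for which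
every ghost path is separated from all other ghost monomials by a linear functional (`sep`); in
particular ghost paths are linearly independent. -/
structure LeavittFamily (K : Type) [Field K] (G : FinGraph) (R : Type) [Ring R] [Algebra K R] where
  p : G.V → R
  x : G.E → R
  y : G.E → R
  p_mul : ∀ v w, p v * p w = if v = w then p v else 0
  p_x : ∀ e, p (G.s e) * x e = x e
  x_p : ∀ e, x e * p (G.r e) = x e
  p_y : ∀ e, p (G.r e) * y e = y e
  y_p : ∀ e, y e * p (G.s e) = y e
  y_x : ∀ e f, y e * x f = if e = f then p (G.r e) else 0
  ck : ∀ v, G.IsRegular v → p v = ∑ e ∈ Finset.univ.filter (fun e => G.s e = v), x e * y e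
  sum_p : 1 = ∑ v, p v
  gen : ∀ S : Submodule K R, 1 ∈ S → (∀ a ∈ S, ∀ v, p v * a ∈ S) → (∀ a ∈ S, ∀ e, x e * a ∈ S) →
    (∀ a ∈ S, ∀ e, y e * a ∈ S) → ∀ a, a ∈ S
  sep : ∀ v l, IsPathFrom v l → ∃ φ : R →ₗ[K] K, φ (ghostProd y l * p v) ≠ 0 ∧
    ∀ v' l', (v', l') ≠ (v, l) → φ (ghostProd y l' * p v') = 0

namespace LeavittFamily

variable {K : Type} [Field K] {G : FinGraph} {R : Type} [Ring R] [Algebra K R]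
  (L : LeavittFamily K G R)

lemma p_idem (v : G.V) : L.p v * L.p v = L.p v := by simp [L.p_mul]

lemma p_ghost (v : G.V) (e : G.E) : L.p v * L.y e = if G.r e = v then L.y e else 0 := by
  conv_lhs => rw [← L.p_y e]
  rw [← mul_assoc, L.p_mul]
  split_ifs with h1 h2 h2
  · rw [h1, L.p_y]
  · exact absurd h1.symm h2
  · exact absurd h2.symm h1
  · simp

lemma ghost_p (v : G.V) (e : G.E) : L.y e * L.p v = if G.s e = v then L.y e else 0 := by
  conv_lhs => rw [← L.y_p e]
  rw [mul_assoc, L.p_mul]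
  split_ifs with h1
  · rw [L.y_p]
  · simp

lemma p_edge (v : G.V) (e : G.E) : L.p v * L.x e = if G.s e = v then L.x e else 0 := by
  conv_lhs => rw [← L.p_x e]
  rw [← mul_assoc, L.p_mul]
  split_ifs with h1 h2 h2
  · rw [h1, L.p_x]
  · exact absurd h1.symm h2
  · exact absurd h2.symm h1
  · simp

/-- The ghost monomial given by a base vertex and a list of edges. It vanishes unless the list is a
path from that vertex, see `mono_eq_zero`. -/
def mono (v : G.V) (l : List G.E) : R := ghostProd L.y l * L.p v

lemma y_mono (e : G.E) (v : G.V) (l : List G.E) : L.y e * L.mono v l = L.mono v (e :: l) := by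
  simp [mono, ghostProd, mul_assoc]

lemma p_mono (w : G.V) (v : G.V) (l : List G.E) :
    L.p w * L.mono v l = if pathEnd v l = w then L.mono v l else 0 := by
  cases l with
  | nil =>
    simp only [mono, ghostProd, one_mul, L.p_mul, pathEnd]
    by_cases h : w = v
    · simp [h]
    · simp [h, Ne.symm h]
  | cons e l =>
    have h : pathEnd v (e :: l) = G.r e := rfl
    rw [h, ← L.y_mono, ← mul_assoc, L.p_ghost, ite_mul, zero_mul]

lemma mono_p (v w : G.V) (l : List G.E) :
    L.mono v l * L.p w = if v = w then L.mono v l else 0 := by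
  rw [mono, mul_assoc, L.p_mul]
  split_ifs <;> simp

lemma mono_eq_zero {v : G.V} {l : List G.E} (h : ¬ IsPathFrom v l) : L.mono v l = 0 := by
  induction l with
  | nil => exact absurd trivial h
  | cons e l ih =>
    rw [← y_mono]
    by_cases hl : IsPathFrom v l
    · have hs : pathEnd v l ≠ G.s e := fun h' => h ⟨hl, h'.symm⟩
      rw [← L.y_p e, mul_assoc, L.p_mono, if_neg hs, mul_zero]
    · rw [ih hl, mul_zero]

/-- The ghost path algebra, as the linear span of the ghost monomials. -/
def ghostSpan : Submodule K R :=
  Submodule.span K (Set.range fun q : G.V × List G.E => L.mono q.1 q.2)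

lemma mono_mem (v : G.V) (l : List G.E) : L.mono v l ∈ L.ghostSpan :=
  Submodule.subset_span ⟨(v, l), rfl⟩

lemma p_mem_ghostSpan (v : G.V) : L.p v ∈ L.ghostSpan := by
  simpa [mono, ghostProd] using L.mono_mem v []

lemma y_mul_mem (e : G.E) {a : R} (ha : a ∈ L.ghostSpan) : L.y e * a ∈ L.ghostSpan := by
  have : L.ghostSpan ≤ L.ghostSpan.comap (LinearMap.mulLeft K (L.y e)) := by
    refine Submodule.span_le.2 ?_
    rintro _ ⟨⟨v, l⟩, rfl⟩
    simpa [L.y_mono] using L.mono_mem v (e :: l)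
  exact this ha

lemma p_mul_mem (w : G.V) {a : R} (ha : a ∈ L.ghostSpan) : L.p w * a ∈ L.ghostSpan := by
  have : L.ghostSpan ≤ L.ghostSpan.comap (LinearMap.mulLeft K (L.p w)) := by
    refine Submodule.span_le.2 ?_
    rintro _ ⟨⟨v, l⟩, rfl⟩
    simp only [Submodule.comap_coe, Set.mem_preimage, LinearMap.mulLeft_apply, L.p_mono]
    split_ifs
    · exact L.mono_mem v l
    · exact zero_mem _
  exact this ha

/-- An exhaustive filtration of the algebra starting at the ghost path algebra: `a` lies in level
`N + 1` if every `y e * a` lies in level `N` and `p v * a` is in the ghost path algebra for every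
sink `v`. Since `p v = ∑ x e * y e` at regular vertices, `a` is recovered from these elements, so
statements about the whole algebra reduce to the ghost path algebra by induction on the level. -/
def fil : ℕ → Submodule K R
  | 0 => L.ghostSpan
  | N + 1 => (⨅ e, (fil N).comap (LinearMap.mulLeft K (L.y e))) ⊓
      ⨅ v, ⨅ _ : ¬ G.IsRegular v, L.ghostSpan.comap (LinearMap.mulLeft K (L.p v))

lemma mem_fil_succ {N : ℕ} {a : R} : a ∈ L.fil (N + 1) ↔
    (∀ e, L.y e * a ∈ L.fil N) ∧ ∀ v, ¬ G.IsRegular v → L.p v * a ∈ L.ghostSpan := by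
  simp [fil, Submodule.mem_iInf]

lemma fil_le_succ (N : ℕ) : L.fil N ≤ L.fil (N + 1) := by
  induction N with
  | zero =>
    exact fun a ha =>
      L.mem_fil_succ.2 ⟨fun e => L.y_mul_mem e ha, fun v _ => L.p_mul_mem v ha⟩
  | succ N ih =>
    intro a ha
    rw [mem_fil_succ] at ha ⊢
    exact ⟨fun e => ih (ha.1 e), ha.2⟩

lemma fil_mono : Monotone L.fil := monotone_nat_of_le_succ L.fil_le_succ

lemma p_mul_mem_fil (w : G.V) {N : ℕ} {a : R} (ha : a ∈ L.fil N) : L.p w * a ∈ L.fil N := by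
  cases N with
  | zero => exact L.p_mul_mem w ha
  | succ N =>
    rw [mem_fil_succ] at ha ⊢
    refine ⟨fun e => ?_, fun v hv => ?_⟩
    · rw [← mul_assoc, L.ghost_p]
      split_ifs
      · exact ha.1 e
      · simp
    · rw [← mul_assoc, L.p_mul]
      split_ifs
      · exact ha.2 v hv
      · simp

lemma x_mul_mem_fil (f : G.E) {N : ℕ} {a : R} (ha : a ∈ L.fil N) : L.x f * a ∈ L.fil (N + 1) := by
  rw [mem_fil_succ]
  refine ⟨fun e => ?_, fun v hv => ?_⟩
  · rw [← mul_assoc, L.y_x]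
    split_ifs
    · exact L.p_mul_mem_fil _ ha
    · simp
  · rw [← mul_assoc, L.p_edge, if_neg (fun h => hv ⟨f, h⟩), zero_mul]
    exact zero_mem _

lemma exists_mem_fil (a : R) : ∃ N, a ∈ L.fil N := by
  have key := L.gen (⨆ N, L.fil N)
  simp only [Submodule.mem_iSup_of_directed _ L.fil_mono.directed_le] at key
  refine key ⟨0, ?_⟩ ?_ ?_ ?_ a
  · rw [L.sum_p]
    exact sum_mem fun v _ => L.p_mem_ghostSpan v
  · rintro a ⟨N, h⟩ v
    exact ⟨N, L.p_mul_mem_fil v h⟩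
  · rintro a ⟨N, h⟩ e
    exact ⟨N + 1, L.x_mul_mem_fil e h⟩
  · rintro a ⟨N, h⟩ e
    exact ⟨N, (L.mem_fil_succ.1 (L.fil_le_succ N h)).1 e⟩

lemma eq_sum {M : Type*} [AddCommGroup M] [Module R M] (a : M) :
    a = ∑ v, L.p v • a := by
  rw [← Finset.sum_smul, ← L.sum_p, one_smul]

lemma p_smul_eq {M : Type*} [AddCommGroup M] [Module R M] {v : G.V} (hv : G.IsRegular v) (a : M) :
    L.p v • a = ∑ e ∈ Finset.univ.filter (fun e => G.s e = v), L.x e • L.y e • a := by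
  rw [L.ck v hv, Finset.sum_smul]
  simp [mul_smul]

/-! ### Leading nodes -/

variable {ι : Type} [DecidableEq ι]

/-- The vector in `R^ι` attached to a node. A node is a triple consisting of a base vertex, a
coordinate and a list of edges; its vector has the ghost monomial of the list in the given
coordinate and zeros elsewhere. Nodes form a forest, in which the children of a node are obtained
by prolonging its list. -/
def ev (a : G.V × ι × List G.E) : ι → R := Pi.single a.2.1 (L.mono a.1 a.2.2)

/-- The child of a node along the edge `e`. -/
def child (e : G.E) (a : G.V × ι × List G.E) : G.V × ι × List G.E := (a.1, a.2.1, e :: a.2.2)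

lemma y_smul_ev (e : G.E) (a : G.V × ι × List G.E) : L.y e • L.ev a = L.ev (child e a) := by
  rw [ev, ← Pi.single_smul, smul_eq_mul, y_mono]; rfl

lemma p_smul_ev (w : G.V) (a : G.V × ι × List G.E) :
    L.p w • L.ev a = if pathEnd a.1 a.2.2 = w then L.ev a else 0 := by
  rw [ev, ← Pi.single_smul, smul_eq_mul, p_mono]
  split_ifs <;> simp

/-- The linear independence of the nodes which are paths. -/
lemma ev_notMem (a : G.V × ι × List G.E) (ha : IsPathFrom a.1 a.2.2) :
    L.ev a ∉ Submodule.span K (L.ev '' {b | b ≠ a}) := by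
  obtain ⟨v, j, l⟩ := a
  obtain ⟨φ, h1, h2⟩ := L.sep v l ha
  intro hmem
  have : Submodule.span K (L.ev '' {b | b ≠ (v, j, l)}) ≤
      LinearMap.ker (φ ∘ₗ (LinearMap.proj j : (ι → R) →ₗ[K] R)) := by
    refine Submodule.span_le.2 ?_
    rintro _ ⟨⟨v', j', l'⟩, hb, rfl⟩
    simp only [SetLike.mem_coe, LinearMap.mem_ker, LinearMap.comp_apply, LinearMap.proj_apply, ev]
    by_cases hj : j' = j
    · subst hj
      rw [Pi.single_eq_same]
      apply h2
      rintro h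
      apply hb
      simp_all
    · rw [Pi.single_eq_of_ne (Ne.symm hj), map_zero]
  have h3 := this hmem
  simp only [LinearMap.mem_ker, LinearMap.comp_apply, LinearMap.proj_apply, ev,
    Pi.single_eq_same] at h3
  exact h1 h3

/-- Nodes are totally ordered by an injective rank in `ℕ`, and this order is preserved by passing
to children along the same edge. The rank is the base `c` numeral whose leading digit encodes the
root and whose further digits encode the edges. -/
lemma exists_rank (G : FinGraph) (ι : Type) [Fintype ι] :
    ∃ rk : G.V × ι × List G.E → ℕ, Function.Injective rk ∧
      ∀ e a b, rk a < rk b → rk (child e a) < rk (child e b) := by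
  classical
  let root := Fintype.equivFin (G.V × ι)
  let ie := Fintype.equivFin G.E
  set c := Fintype.card (G.V × ι) + Fintype.card G.E + 2 with hc
  -- Leading digits are `r + 1`, hence nonzero, so that numerals determine their digits.
  let rk' : ℕ → List G.E → ℕ := fun r l => l.foldr (fun e t => c * t + ie e) (r + 1)
  have hcons : ∀ r e l, rk' r (e :: l) = c * rk' r l + ie e := fun _ _ _ => rfl
  have hnil : ∀ r, rk' r [] = r + 1 := fun _ => rfl
  have hpos : ∀ r l, 0 < rk' r l := by
    intro r l
    induction l with
    | nil => rw [hnil]; omega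
    | cons e l ih => rw [hcons]; positivity
  have hlt : ∀ e, (ie e : ℕ) < c := fun e => by have := (ie e).isLt; omega
  have hinj : ∀ l l' r r', r + 1 < c → r' + 1 < c → rk' r l = rk' r' l' → r = r' ∧ l = l' := by
    intro l
    induction l with
    | nil =>
      intro l' r r' hr hr' h
      cases l' with
      | nil => rw [hnil, hnil] at h; exact ⟨by omega, rfl⟩
      | cons e l' =>
        rw [hnil, hcons] at h
        have := Nat.mul_le_mul_left c (hpos r' l')
        omega
    | cons e l ih =>
      intro l' r r' hr hr' h
      cases l' with
      | nil =>
        rw [hnil, hcons] at h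
        have := Nat.mul_le_mul_left c (hpos r l)
        omega
      | cons f l' =>
        rw [hcons, hcons] at h
        have h1 : rk' r l = rk' r' l' := by
          have := congrArg (· / c) h
          simpa [Nat.mul_add_div (show 0 < c by omega), Nat.div_eq_of_lt (hlt _)] using this
        rw [h1] at h
        have h2 : ie e = ie f := Fin.ext (by omega)
        obtain ⟨h3, h4⟩ := ih _ _ _ hr hr' h1
        exact ⟨h3, by rw [h4, ie.injective h2]⟩
  refine ⟨fun a => rk' (root (a.1, a.2.1)) a.2.2, ?_, ?_⟩
  · rintro ⟨v, j, l⟩ ⟨v', j', l'⟩ h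
    have := hinj l l' _ _ (by have := (root (v, j)).isLt; omega)
      (by have := (root (v', j')).isLt; omega) h
    obtain ⟨rfl, rfl⟩ := Prod.mk.inj (root.injective (Fin.ext this.1))
    rw [this.2]
  · intro e a b h
    change rk' (root (a.1, a.2.1)) (e :: a.2.2) < rk' (root (b.1, b.2.1)) (e :: b.2.2)
    rw [hcons, hcons]
    have : c * rk' (root (a.1, a.2.1)) a.2.2 < c * rk' (root (b.1, b.2.1)) b.2.2 :=
      Nat.mul_lt_mul_of_pos_left h (by omega)
    omega

/-- The span of the nodes of rank less than `k`. -/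
def below (rk : G.V × ι × List G.E → ℕ) (k : ℕ) : Submodule K (ι → R) :=
  Submodule.span K (L.ev '' {b | rk b < k})

lemma below_mono (rk : G.V × ι × List G.E → ℕ) : Monotone (L.below rk) := fun _ _ h =>
  Submodule.span_mono (Set.image_mono fun _ hb => lt_of_lt_of_le hb h)

lemma ev_mem_below {rk : G.V × ι × List G.E → ℕ} {a : G.V × ι × List G.E} {k : ℕ} (h : rk a < k) :
    L.ev a ∈ L.below rk k := Submodule.subset_span ⟨a, h, rfl⟩

lemma ev_notMem_below {rk : G.V × ι × List G.E → ℕ} (a : G.V × ι × List G.E)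
    (ha : IsPathFrom a.1 a.2.2) : L.ev a ∉ L.below rk (rk a) := by
  intro h
  refine L.ev_notMem a ha (Submodule.span_mono (Set.image_mono ?_) h)
  rintro b hb rfl
  exact lt_irrefl (rk b) hb

lemma p_smul_mem_below {rk : G.V × ι × List G.E → ℕ} (w : G.V) {k : ℕ} {z : ι → R}
    (hz : z ∈ L.below rk k) : L.p w • z ∈ L.below rk k := by
  have : L.below rk k ≤ (L.below rk k).comap (Algebra.lsmul K K (ι → R) (L.p w)) := by
    refine Submodule.span_le.2 ?_
    rintro _ ⟨b, hb, rfl⟩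
    simp only [Submodule.comap_coe, Set.mem_preimage, Algebra.lsmul_coe, L.p_smul_ev]
    split_ifs
    · exact L.ev_mem_below hb
    · exact zero_mem _
  exact this hz

lemma y_smul_mem_below {rk : G.V × ι × List G.E → ℕ}
    (hrk : ∀ e a b, rk a < rk b → rk (child e a) < rk (child e b))
    (e : G.E) (a : G.V × ι × List G.E) {z : ι → R}
    (hz : z ∈ L.below rk (rk a)) : L.y e • z ∈ L.below rk (rk (child e a)) := by
  have : L.below rk (rk a) ≤
      (L.below rk (rk (child e a))).comap (Algebra.lsmul K K (ι → R) (L.y e)) := by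
    refine Submodule.span_le.2 ?_
    rintro _ ⟨b, hb, rfl⟩
    simp only [Submodule.comap_coe, Set.mem_preimage, Algebra.lsmul_coe, L.y_smul_ev]
    exact L.ev_mem_below (hrk _ _ _ hb)
  exact this hz

/-- The node `a` is the leading node of `z`: up to nodes of smaller rank, `z` is a nonzero multiple of
the vector of `a`. -/
def Lead (rk : G.V × ι × List G.E → ℕ) (z : ι → R) (a : G.V × ι × List G.E) : Prop :=
  IsPathFrom a.1 a.2.2 ∧ ∃ c : K, c ≠ 0 ∧ z - c • L.ev a ∈ L.below rk (rk a)

lemma Lead.mem {L : LeavittFamily K G R} {rk : G.V × ι × List G.E → ℕ} {z : ι → R}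
    {a : G.V × ι × List G.E} (h : L.Lead rk z a) {k : ℕ} (hk : rk a < k) : z ∈ L.below rk k := by
  obtain ⟨_, c, _, h⟩ := h
  have := add_mem (L.below_mono rk hk.le h) (Submodule.smul_mem _ c (L.ev_mem_below hk))
  simpa using this

lemma Lead.notMem {L : LeavittFamily K G R} {rk : G.V × ι × List G.E → ℕ} {z : ι → R}
    {a : G.V × ι × List G.E} (h : L.Lead rk z a) : z ∉ L.below rk (rk a) := by
  obtain ⟨hp, c, hc, h⟩ := h
  intro hz
  apply L.ev_notMem_below (rk := rk) a hp
  have := Submodule.smul_mem _ c⁻¹ (sub_mem hz h)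
  simpa [smul_smul, inv_mul_cancel₀ hc] using this

lemma exists_lead {rk : G.V × ι × List G.E → ℕ} (hinj : Function.Injective rk) {k : ℕ} {z : ι → R}
    (hz : z ∈ L.below rk k) (h0 : z ≠ 0) : ∃ a, L.Lead rk z a ∧ rk a < k := by
  induction k generalizing z with
  | zero => exact absurd (by simpa [below] using hz) h0
  | succ k ih =>
    by_cases hk : ∃ a, rk a = k ∧ IsPathFrom a.1 a.2.2
    · obtain ⟨a, rfl, ha⟩ := hk
      have hset : L.ev '' {b | rk b < rk a + 1} = insert (L.ev a) (L.ev '' {b | rk b < rk a}) := by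
        rw [← Set.image_insert_eq]
        congr 1
        ext b
        simp only [Set.mem_ofPred_eq, Set.mem_insert_iff, Nat.lt_succ_iff_lt_or_eq, hinj.eq_iff]
        tauto
      rw [below, hset, Submodule.mem_span_insert] at hz
      obtain ⟨c, w, hw, rfl⟩ := hz
      change w ∈ L.below rk (rk a) at hw
      by_cases hc : c = 0
      · subst hc
        rw [zero_smul, zero_add] at h0 ⊢
        obtain ⟨b, hb, hlt⟩ := ih hw h0
        exact ⟨b, hb, by omega⟩
      · exact ⟨a, ⟨ha, c, hc, by simpa using hw⟩, by omega⟩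
    · have : L.below rk (k + 1) ≤ L.below rk k := by
        refine Submodule.span_le.2 ?_
        rintro _ ⟨b, hb, rfl⟩
        by_cases hbk : rk b = k
        · have : ¬ IsPathFrom b.1 b.2.2 := fun h => hk ⟨b, hbk, h⟩
          rw [ev, L.mono_eq_zero this, Pi.single_zero]
          exact zero_mem _
        · exact L.ev_mem_below (by have : rk b < k + 1 := hb; omega)
      obtain ⟨b, hb, hlt⟩ := ih (this hz) h0
      exact ⟨b, hb, by omega⟩

lemma Lead.pathEnd_eq {L : LeavittFamily K G R} {rk : G.V × ι × List G.E → ℕ} {z : ι → R}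
    {a : G.V × ι × List G.E} (h : L.Lead rk z a) {v : G.V} (hv : L.p v • z = z) :
    pathEnd a.1 a.2.2 = v := by
  by_contra hne
  apply h.notMem
  obtain ⟨_, c, _, h⟩ := h
  have := L.p_smul_mem_below v h
  rwa [smul_sub, hv, smul_comm, L.p_smul_ev, if_neg hne, smul_zero, sub_zero] at this

lemma Lead.y_smul {L : LeavittFamily K G R} {rk : G.V × ι × List G.E → ℕ}
    (hrk : ∀ e a b, rk a < rk b → rk (child e a) < rk (child e b)) {z : ι → R}
    {a : G.V × ι × List G.E} (h : L.Lead rk z a) {e : G.E} (he : G.s e = pathEnd a.1 a.2.2) :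
    L.Lead rk (L.y e • z) (child e a) := by
  obtain ⟨hp, c, hc, h⟩ := h
  refine ⟨⟨hp, he⟩, c, hc, ?_⟩
  have := L.y_smul_mem_below hrk e a h
  rwa [smul_sub, smul_comm, L.y_smul_ev] at this

/-- The descendant of the node `a` along the list of edges `l`. -/
def desc (l : List G.E) (a : G.V × ι × List G.E) : G.V × ι × List G.E := (a.1, a.2.1, l ++ a.2.2)

/-- Multiplication by a ghost path moves the leading node to the corresponding descendant. -/
lemma Lead.ghost_smul {L : LeavittFamily K G R} {rk : G.V × ι × List G.E → ℕ}
    (hrk : ∀ e a b, rk a < rk b → rk (child e a) < rk (child e b)) {z : ι → R}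
    {a : G.V × ι × List G.E} (h : L.Lead rk z a) (l : List G.E)
    (hl : IsPathFrom a.1 (l ++ a.2.2)) :
    L.Lead rk (ghostProd L.y l • z) (desc l a) := by
  induction l with
  | nil => simpa [ghostProd, desc] using h
  | cons e l ih =>
    rw [ghostProd, mul_smul]
    exact (ih hl.1).y_smul hrk hl.2

lemma isPathFrom_append {v : G.V} {l' : List G.E} (h' : IsPathFrom v l') (l : List G.E) :
    IsPathFrom v (l ++ l') ↔ IsPathFrom (pathEnd v l') l := by
  have hend : ∀ l : List G.E, pathEnd v (l ++ l') = pathEnd (pathEnd v l') l := by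
    intro l; cases l <;> rfl
  induction l with
  | nil => simpa [IsPathFrom] using h'
  | cons e l ih =>
    exact and_congr ih (iff_of_eq (congrArg (G.s e = ·) (hend l)))

lemma linearIndependent_of_lead {rk : G.V × ι × List G.E → ℕ} (hinj : Function.Injective rk)
    {J : Type} (z : J → ι → R) (a : J → G.V × ι × List G.E) (ha : Function.Injective a)
    (h : ∀ j, L.Lead rk (z j) (a j)) : LinearIndependent K z := by
  classical
  rw [linearIndependent_iff']
  intro s g hsum i hi
  by_contra hgi
  obtain ⟨j, hj, hmax⟩ := Finset.exists_max_image (s.filter fun j => g j ≠ 0) (fun j => rk (a j))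
    ⟨i, by simp [hi, hgi]⟩
  rw [Finset.mem_filter] at hj
  apply (h j).notMem
  rw [← Finset.add_sum_erase _ _ hj.1] at hsum
  have hmem : ∑ x ∈ s.erase j, g x • z x ∈ L.below rk (rk (a j)) := by
    refine sum_mem fun x hx => ?_
    rw [Finset.mem_erase] at hx
    by_cases hgx : g x = 0
    · rw [hgx, zero_smul]; exact zero_mem _
    · refine Submodule.smul_mem _ _ ((h x).mem (lt_of_le_of_ne (hmax x (by simp [hx, hgx])) ?_))
      exact fun he => hx.1 (ha (hinj he))
  have h2 : g j • z j ∈ L.below rk (rk (a j)) := by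
    rw [eq_neg_of_add_eq_zero_left hsum]
    exact neg_mem hmem
  have := Submodule.smul_mem _ (g j)⁻¹ h2
  rwa [smul_smul, inv_mul_cancel₀ hj.2, one_smul] at this

/-! ### Reduced generating sets -/

/-- The vector `z` is homogeneous (fixed by a vertex) and has its coordinates in the ghost path
algebra, the latter expressed by bounding the ranks of the nodes involved. -/
def Good (rk : G.V × ι × List G.E → ℕ) (z : ι → R) : Prop :=
  (∃ v, L.p v • z = z) ∧ ∃ k, z ∈ L.below rk k

lemma exists_mem_below [Fintype ι] (rk : G.V × ι × List G.E → ℕ) {z : ι → R}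
    (hz : ∀ j, z j ∈ L.ghostSpan) : ∃ k, z ∈ L.below rk k := by
  rw [← Submodule.mem_iSup_of_directed _ (L.below_mono rk).directed_le]
  have hle : ∀ j, L.ghostSpan ≤
      (⨆ k, L.below rk k).comap (LinearMap.single K (fun _ : ι => R) j) := by
    intro j
    refine Submodule.span_le.2 ?_
    rintro _ ⟨⟨v, l⟩, rfl⟩
    exact Submodule.mem_iSup_of_mem (rk (v, j, l) + 1)
      (L.ev_mem_below (a := (v, j, l)) (Nat.lt_succ_self _))
  have hsum : z = ∑ j, LinearMap.single K (fun _ : ι => R) j (z j) := by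
    simpa using (Finset.univ_sum_single z).symm
  rw [hsum]
  exact sum_mem fun j _ => hle j (hz j)

lemma exists_good_gens_ghost [Fintype ι] (rk : G.V × ι × List G.E → ℕ) {z : ι → R}
    (hz : ∀ j, z j ∈ L.ghostSpan) : ∃ S : Finset (ι → R), (∀ w ∈ S, L.Good rk w) ∧
      Submodule.span R (S : Set (ι → R)) = Submodule.span R {z} := by
  classical
  refine ⟨Finset.univ.image fun v => L.p v • z, ?_, le_antisymm ?_ ?_⟩
  · intro w hw
    obtain ⟨v, _, rfl⟩ := Finset.mem_image.1 hw
    refine ⟨⟨v, by rw [smul_smul, L.p_idem]⟩, L.exists_mem_below rk fun j => ?_⟩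
    exact L.p_mul_mem v (hz j)
  · refine Submodule.span_le.2 ?_
    intro w hw
    obtain ⟨v, _, rfl⟩ := Finset.mem_image.1 (Finset.mem_coe.1 hw)
    exact Submodule.smul_mem _ _ (Submodule.mem_span_singleton_self z)
  · rw [Submodule.span_singleton_le_iff_mem]
    have hsum := L.eq_sum z
    rw [hsum]
    refine sum_mem fun v _ => Submodule.subset_span ?_
    rw [← hsum]
    exact Finset.mem_coe.2 (Finset.mem_image_of_mem _ (Finset.mem_univ v))

/-- A cyclic submodule has finitely many good generators. For `z` in filtration level `N + 1`
these are the generators found for all `y e • z`, together with those for `p v • z` at sinks. -/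
lemma exists_good_gens_fil [Fintype ι] (rk : G.V × ι × List G.E → ℕ) (N : ℕ) : ∀ {z : ι → R},
    (∀ j, z j ∈ L.fil N) → ∃ S : Finset (ι → R), (∀ w ∈ S, L.Good rk w) ∧
      Submodule.span R (S : Set (ι → R)) = Submodule.span R {z} := by
  classical
  induction N with
  | zero => exact fun hz => L.exists_good_gens_ghost rk hz
  | succ N ih =>
    intro z hz
    have h1 : ∀ e, ∃ S : Finset (ι → R), (∀ w ∈ S, L.Good rk w) ∧
        Submodule.span R (S : Set (ι → R)) = Submodule.span R {L.y e • z} := fun e =>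
      ih fun j => (L.mem_fil_succ.1 (hz j)).1 e
    have h2 : ∀ v, ∃ S : Finset (ι → R), (∀ w ∈ S, L.Good rk w) ∧
        (¬ G.IsRegular v → Submodule.span R (S : Set (ι → R)) = Submodule.span R {L.p v • z}) ∧
        (G.IsRegular v → S = ∅) := by
      intro v
      by_cases hv : G.IsRegular v
      · exact ⟨∅, by simp, fun h => absurd hv h, fun _ => rfl⟩
      · obtain ⟨S, hS, hs⟩ := L.exists_good_gens_ghost rk (z := L.p v • z)
          fun j => (L.mem_fil_succ.1 (hz j)).2 v hv
        exact ⟨S, hS, fun _ => hs, fun h => absurd h hv⟩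
    choose A hA hAs using h1
    choose B hB hBs hB0 using h2
    refine ⟨Finset.univ.biUnion A ∪ Finset.univ.biUnion B, ?_, le_antisymm ?_ ?_⟩
    · intro w hw
      simp only [Finset.mem_union, Finset.mem_biUnion, Finset.mem_univ, true_and] at hw
      rcases hw with ⟨e, hw⟩ | ⟨v, hw⟩
      · exact hA e w hw
      · exact hB v w hw
    · refine Submodule.span_le.2 ?_
      intro w hw
      simp only [Finset.mem_coe, Finset.mem_union, Finset.mem_biUnion, Finset.mem_univ,
        true_and] at hw
      have hz' := Submodule.mem_span_singleton_self (R := R) z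
      rcases hw with ⟨e, hw⟩ | ⟨v, hw⟩
      · have : w ∈ Submodule.span R {L.y e • z} := hAs e ▸ Submodule.subset_span hw
        exact (Submodule.span_singleton_le_iff_mem _ _).2 (Submodule.smul_mem _ _ hz') this
      · have hv : ¬ G.IsRegular v := fun h => by rw [hB0 v h] at hw; simp at hw
        have : w ∈ Submodule.span R {L.p v • z} := hBs v hv ▸ Submodule.subset_span hw
        exact (Submodule.span_singleton_le_iff_mem _ _).2 (Submodule.smul_mem _ _ hz') this
    · rw [Submodule.span_singleton_le_iff_mem, L.eq_sum z]
      refine sum_mem fun v _ => ?_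
      by_cases hv : G.IsRegular v
      · rw [L.p_smul_eq hv]
        refine sum_mem fun e _ => Submodule.smul_mem _ _ ?_
        have : L.y e • z ∈ Submodule.span R (A e : Set (ι → R)) := by
          rw [hAs]; exact Submodule.mem_span_singleton_self _
        refine Submodule.span_mono ?_ this
        exact Finset.coe_subset.2 ((Finset.subset_biUnion_of_mem A (Finset.mem_univ e)).trans
          Finset.subset_union_left)
      · have : L.p v • z ∈ Submodule.span R (B v : Set (ι → R)) := by
          rw [hBs v hv]; exact Submodule.mem_span_singleton_self _
        refine Submodule.span_mono ?_ this
        exact Finset.coe_subset.2 ((Finset.subset_biUnion_of_mem B (Finset.mem_univ v)).trans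
          Finset.subset_union_right)

lemma exists_good_gens [Fintype ι] (rk : G.V × ι × List G.E → ℕ) (P : Submodule R (ι → R))
    (hP : P.FG) : ∃ S : Finset (ι → R), (∀ w ∈ S, L.Good rk w) ∧
      Submodule.span R (S : Set (ι → R)) = P := by
  classical
  induction P, hP using Submodule.fg_induction with
  | singleton z =>
    choose N hN using fun j => L.exists_mem_fil (z j)
    refine L.exists_good_gens_fil rk (Finset.univ.sup N) fun j => ?_
    exact L.fil_mono (Finset.le_sup (Finset.mem_univ j)) (hN j)
  | sup P₁ P₂ _ _ h₁ h₂ =>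
    obtain ⟨S₁, hS₁, rfl⟩ := h₁
    obtain ⟨S₂, hS₂, rfl⟩ := h₂
    refine ⟨S₁ ∪ S₂, fun w hw => ?_, by rw [Finset.coe_union, Submodule.span_union]⟩
    exact (Finset.mem_union.1 hw).elim (hS₁ w) (hS₂ w)

/-- The vectors in `S` are nonzero, and no leading node of one of them is a descendant of the leading
node of another one. -/
def Reduced (rk : G.V × ι × List G.E → ℕ) (S : Finset (ι → R)) : Prop :=
  (∀ z ∈ S, z ≠ 0) ∧ ∀ z ∈ S, ∀ w ∈ S, ∀ a l, L.Lead rk z (desc l a) → L.Lead rk w a → z = w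

/-- Good generating sets can be made reduced without changing the submodule they generate: if the
leading node of `z` is a descendant of that of `w`, a ghost multiple of `w` is subtracted from `z` to
lower its leading node. The sum of the ranks decreases. -/
lemma exists_reduced {rk : G.V × ι × List G.E → ℕ}
    (hrk : ∀ e a b, rk a < rk b → rk (child e a) < rk (child e b))
    (S : Finset (ι → R)) (hS : ∀ w ∈ S, L.Good rk w) :
    ∃ S' : Finset (ι → R), (∀ w ∈ S', L.Good rk w) ∧
      Submodule.span R (S' : Set (ι → R)) = Submodule.span R (S : Set (ι → R)) ∧
      L.Reduced rk S' := by
  classical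
  -- `d z` is one more than the rank of the leading node of `z`, and `0` for `z = 0`.
  let d : (ι → R) → ℕ := fun z => sInf {k | z ∈ L.below rk k}
  have hd : ∀ z k, z ∈ L.below rk k → d z ≤ k := fun z k h => Nat.sInf_le h
  have hd' : ∀ z a, L.Lead rk z a → rk a < d z := by
    intro z a h
    have : z ∈ L.below rk (d z) := Nat.sInf_mem (s := {k | z ∈ L.below rk k})
      ⟨rk a + 1, h.mem (Nat.lt_succ_self _)⟩
    by_contra hlt
    exact h.notMem (L.below_mono rk (not_lt.1 hlt) this)
  induction hN : ∑ z ∈ S, d z using Nat.strong_induction_on generalizing S with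
  | _ N ih =>
    subst hN
    set S₀ := S.erase 0 with hS₀
    have hsub : S₀ ⊆ S := Finset.erase_subset _ _
    have hspan₀ : Submodule.span R (S₀ : Set (ι → R)) = Submodule.span R (S : Set (ι → R)) := by
      rw [hS₀, Finset.coe_erase, Submodule.span_sdiff_singleton_zero]
    by_cases hred : L.Reduced rk S₀
    · exact ⟨S₀, fun w hw => hS w (hsub hw), hspan₀, hred⟩
    have hnz : ∀ z ∈ S₀, z ≠ 0 := fun z hz => (Finset.mem_erase.1 hz).1
    simp only [Reduced, not_and] at hred
    have := hred hnz
    push Not at this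
    obtain ⟨z, hz, w, hw, a, l, hza, hwa, hzw⟩ := this
    obtain ⟨v, hv⟩ := (hS z (hsub hz)).1
    -- Both `z` and `ghostProd L.y l • w` have leading node `desc l a`; after scaling it cancels in the
    -- difference.
    obtain ⟨hpath, c, hc, hc'⟩ := id hza
    obtain ⟨_, c₂, hc₂, hc₂'⟩ := hwa.ghost_smul hrk l hpath
    set t := c * c₂⁻¹ with ht
    set z' := L.p v • (z - t • ghostProd L.y l • w) with hz'
    have hz'mem : z' ∈ L.below rk (rk (desc l a)) := by
      refine L.p_smul_mem_below v ?_
      have := sub_mem hc' (Submodule.smul_mem _ t hc₂')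
      have h3 : z - c • L.ev (desc l a) - t • (ghostProd L.y l • w - c₂ • L.ev (desc l a)) =
          z - t • ghostProd L.y l • w := by
        rw [smul_sub, smul_smul t c₂, ht, inv_mul_cancel_right₀ hc₂]
        abel
      rwa [h3] at this
    set S' := insert z' (S₀.erase z) with hS'
    have hgood : ∀ u ∈ S', L.Good rk u := by
      intro u hu
      rcases Finset.mem_insert.1 hu with rfl | hu
      · exact ⟨⟨v, by rw [hz', smul_smul, L.p_idem]⟩, _, hz'mem⟩
      · exact hS u (hsub (Finset.mem_of_mem_erase hu))
    have hz'eq : z' = z - (L.p v * (algebraMap K R t * ghostProd L.y l)) • w := by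
      rw [hz', smul_sub, hv, mul_smul (L.p v), mul_smul (algebraMap K R t), algebraMap_smul]
    have hwS' : w ∈ S₀.erase z := Finset.mem_erase.2 ⟨Ne.symm hzw, hw⟩
    have hspan : Submodule.span R (S' : Set (ι → R)) = Submodule.span R (S₀ : Set (ι → R)) := by
      apply le_antisymm
      · refine Submodule.span_le.2 fun u hu => ?_
        rcases Finset.mem_insert.1 (Finset.mem_coe.1 hu) with rfl | hu
        · rw [SetLike.mem_coe, hz'eq]
          exact sub_mem (Submodule.subset_span hz)
            (Submodule.smul_mem _ _ (Submodule.subset_span hw))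
        · exact Submodule.subset_span (Finset.mem_of_mem_erase hu)
      · refine Submodule.span_le.2 fun u hu => ?_
        by_cases huz : u = z
        · have : u = z' + (L.p v * (algebraMap K R t * ghostProd L.y l)) • w := by
            rw [hz'eq, huz]; abel
          rw [SetLike.mem_coe, this]
          exact add_mem (Submodule.subset_span (Finset.mem_insert_self _ _))
            (Submodule.smul_mem _ _ (Submodule.subset_span (Finset.mem_insert_of_mem hwS')))
        · exact Submodule.subset_span (Finset.mem_insert_of_mem (Finset.mem_erase.2 ⟨huz, hu⟩))
    have hlt : ∑ u ∈ S', d u < ∑ u ∈ S, d u := by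
      calc ∑ u ∈ S', d u ≤ d z' + ∑ u ∈ S₀.erase z, d u := by
            by_cases hmem : z' ∈ S₀.erase z
            · rw [hS', Finset.insert_eq_of_mem hmem]
              exact Nat.le_add_left _ _
            · rw [hS', Finset.sum_insert hmem]
        _ < d z + ∑ u ∈ S₀.erase z, d u :=
          Nat.add_lt_add_right ((hd _ _ hz'mem).trans_lt (hd' z _ hza)) _
        _ = ∑ u ∈ S₀, d u := Finset.add_sum_erase _ _ hz
        _ ≤ ∑ u ∈ S, d u := Finset.sum_le_sum_of_subset hsub
    obtain ⟨S'', h1, h2, h3⟩ := ih _ hlt S' hgood rfl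
    exact ⟨S'', h1, h2.trans (hspan.trans hspan₀), h3⟩

lemma mem_span_mono_path {a : R} (ha : a ∈ L.ghostSpan) {v : G.V} (hv : a * L.p v = a) :
    a ∈ Submodule.span K (Set.range fun l : {l : List G.E // IsPathFrom v l} => L.mono v l.1) := by
  have : L.ghostSpan ≤ (Submodule.span K (Set.range
      fun l : {l : List G.E // IsPathFrom v l} => L.mono v l.1)).comap
        (LinearMap.mulRight K (L.p v)) := by
    refine Submodule.span_le.2 ?_
    rintro _ ⟨⟨w, l⟩, rfl⟩
    simp only [Submodule.comap_coe, Set.mem_preimage, LinearMap.mulRight_apply, L.mono_p]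
    split_ifs with h
    · subst h
      by_cases hl : IsPathFrom w l
      · exact Submodule.subset_span ⟨⟨l, hl⟩, rfl⟩
      · rw [L.mono_eq_zero hl]; exact zero_mem _
    · exact zero_mem _
  have h := this ha
  rwa [Submodule.mem_comap, LinearMap.mulRight_apply, hv] at h

/-- A reduced set satisfies no relation with coefficients in the ghost path algebra: the vectors
`ghostProd L.y l • z` have pairwise different leading nodes, because in a forest two nodes with a
common descendant are comparable. -/
lemma indep_ghost {rk : G.V × ι × List G.E → ℕ} (hinj : Function.Injective rk)
    (hrk : ∀ e a b, rk a < rk b → rk (child e a) < rk (child e b))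
    {S : Finset (ι → R)} (hS : L.Reduced rk S) (v : S → G.V) (hv : ∀ i, L.p (v i) • i.1 = i.1)
    (a : S → G.V × ι × List G.E) (ha : ∀ i, L.Lead rk i.1 (a i))
    (b : S → R) (hb : ∀ i, b i ∈ L.ghostSpan) (hbv : ∀ i, b i * L.p (v i) = b i)
    (h0 : ∑ i, b i • i.1 = 0) (i : S) : b i = 0 := by
  classical
  have hend : ∀ i, pathEnd (a i).1 (a i).2.2 = v i := fun i => (ha i).pathEnd_eq (hv i)
  have hpath : ∀ i l, IsPathFrom (v i) l → IsPathFrom (a i).1 (l ++ (a i).2.2) := fun i l hl =>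
    (isPathFrom_append (ha i).1 l).2 (by rwa [hend])
  have hlead : ∀ i l, IsPathFrom (v i) l →
      L.Lead rk (ghostProd L.y l • i.1) (desc l (a i)) := fun i l hl =>
    (ha i).ghost_smul hrk l (hpath i l hl)
  have hdesc : ∀ i j l l', l.length ≤ l'.length → desc l (a i) = desc l' (a j) → i = j := by
    intro i j l l' hlen h
    simp only [desc, Prod.mk.injEq] at h
    obtain ⟨h1, h2, h3⟩ := h
    rw [List.append_eq_append_iff] at h3
    have key : ∃ m, (a i).2.2 = m ++ (a j).2.2 := by
      rcases h3 with ⟨m, _, h⟩ | ⟨m, h, h'⟩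
      · exact ⟨m, h⟩
      · have : m = [] := by
          have := congrArg List.length h
          rw [List.length_append] at this
          exact List.length_eq_zero_iff.1 (by omega)
        exact ⟨[], by simpa [this] using h'.symm⟩
    obtain ⟨m, hm⟩ := key
    have hai : a i = desc m (a j) := by
      rw [desc, ← hm, ← h1, ← h2]
    exact Subtype.ext (hS.2 _ i.2 _ j.2 (a j) m (hai ▸ ha i) (ha j))
  have hli : LinearIndependent K
      (fun q : Σ i : S, {l : List G.E // IsPathFrom (v i) l} => ghostProd L.y q.2.1 • q.1.1) := by
    refine L.linearIndependent_of_lead hinj _ (fun q => desc q.2.1 (a q.1)) ?_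
      fun q => hlead _ _ q.2.2
    rintro ⟨i, l, hl⟩ ⟨j, l', hl'⟩ h
    have hij : i = j := by
      rcases le_total l.length l'.length with hle | hle
      · exact hdesc i j l l' hle h
      · exact (hdesc j i l' l hle h.symm).symm
    subst hij
    simp only [desc, Prod.mk.injEq, List.append_cancel_right_eq, true_and] at h
    subst h
    rfl
  choose c hc using fun i => Finsupp.mem_span_range_iff_exists_finsupp.1
    (L.mem_span_mono_path (hb i) (hbv i))
  have hterm : ∀ i : S, b i • i.1 =
      ∑ l ∈ (c i).support, c i l • ghostProd L.y l.1 • i.1 := by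
    intro i
    conv_lhs => rw [← hc i, Finsupp.sum, Finset.sum_smul]
    refine Finset.sum_congr rfl fun l _ => ?_
    rw [smul_assoc, mono, mul_smul, hv]
  have hzero := (linearIndependent_iff'.1 hli) (Finset.univ.sigma fun i => (c i).support)
    (fun q => c q.1 q.2) (by
      rw [Finset.sum_sigma, ← h0]
      exact Finset.sum_congr rfl fun i _ => (hterm i).symm)
  rw [← hc i]
  refine Finset.sum_eq_zero fun l hl => ?_
  have := hzero ⟨i, l⟩ (Finset.mem_sigma.2 ⟨Finset.mem_univ _, hl⟩)
  simp only at this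
  simp [this]

/-- A reduced set satisfies no nontrivial relation at all. A relation is multiplied from the left by
ghost edges and sinks, which lowers the filtration level of its coefficients until `indep_ghost`
applies. -/
lemma indep {rk : G.V × ι × List G.E → ℕ} (hinj : Function.Injective rk)
    (hrk : ∀ e a b, rk a < rk b → rk (child e a) < rk (child e b))
    {S : Finset (ι → R)} (hS : L.Reduced rk S) (v : S → G.V) (hv : ∀ i, L.p (v i) • i.1 = i.1)
    (a : S → G.V × ι × List G.E) (ha : ∀ i, L.Lead rk i.1 (a i))
    (b : S → R) (hbv : ∀ i, b i * L.p (v i) = b i)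
    (h0 : ∑ i, b i • i.1 = 0) (i : S) : b i = 0 := by
  choose N hN using fun i => L.exists_mem_fil (b i)
  replace hN : ∀ i, b i ∈ L.fil (Finset.univ.sup N) := fun i =>
    L.fil_mono (Finset.le_sup (Finset.mem_univ i)) (hN i)
  generalize Finset.univ.sup N = M at hN
  have hmul : ∀ (r : R) (b : S → R), ∑ i, b i • i.1 = 0 → ∑ i, (r * b i) • i.1 = 0 := by
    intro r b h
    simp only [mul_smul]
    rw [← Finset.smul_sum, h, smul_zero]
  induction M generalizing b i with
  | zero => exact L.indep_ghost hinj hrk hS v hv a ha b hN hbv h0 i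
  | succ M ih =>
    have hN' := fun i => L.mem_fil_succ.1 (hN i)
    have hsum := L.eq_sum (b i)
    rw [hsum]
    refine Finset.sum_eq_zero fun w _ => ?_
    by_cases hw : G.IsRegular w
    · rw [L.p_smul_eq hw]
      refine Finset.sum_eq_zero fun e _ => ?_
      have := ih (fun i => L.y e * b i) (fun i => by rw [mul_assoc, hbv]) (hmul _ _ h0) i
        (fun i => (hN' i).1 e)
      rw [smul_eq_mul (L.y e), this, smul_zero]
    · exact L.indep_ghost hinj hrk hS v hv a ha (fun i => L.p w * b i) (fun i => (hN' i).2 w hw)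
        (fun i => by rw [mul_assoc, hbv]) (hmul _ _ h0) i

lemma mem_span_p {v : G.V} {a : R} : a ∈ Submodule.span R {L.p v} ↔ a * L.p v = a := by
  rw [Submodule.mem_span_singleton]
  constructor
  · rintro ⟨b, rfl⟩
    rw [smul_eq_mul, mul_assoc, L.p_idem]
  · exact fun h => ⟨a, h⟩

/-! ### Decomposition of projective modules -/

/-- Finitely generated submodules of free modules are direct sums of vertex modules: a reduced
generating set is independent, up to the vertices fixing its members. -/
theorem exists_equiv_of_fg [Fintype ι] (P : Submodule R (ι → R)) (hP : P.FG) :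
    ∃ (I : Type) (_ : Fintype I) (f : I → G.V),
      Nonempty (P ≃ₗ[R] ((i : I) → Submodule.span R {L.p (f i)})) := by
  classical
  obtain ⟨rk, hinj, hrk⟩ := exists_rank G ι
  obtain ⟨S₁, hg₁, rfl⟩ := L.exists_good_gens rk P hP
  obtain ⟨S, hg, hspan, hred⟩ := L.exists_reduced hrk S₁ hg₁
  rw [← hspan]
  choose v hv using fun i : S => (hg i.1 i.2).1
  have hlead : ∀ i : S, ∃ a, L.Lead rk i.1 a := by
    intro i
    obtain ⟨k, hk⟩ := (hg i.1 i.2).2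
    obtain ⟨a, ha, _⟩ := L.exists_lead hinj hk (hred.1 i.1 i.2)
    exact ⟨a, ha⟩
  choose a ha using hlead
  let Φ : ((i : S) → Submodule.span R {L.p (v i)}) →ₗ[R] (ι → R) :=
    ∑ i, LinearMap.toSpanSingleton R _ i.1 ∘ₗ (Submodule.subtype _) ∘ₗ LinearMap.proj i
  have hΦ : ∀ q, Φ q = ∑ i, (q i).1 • i.1 := by
    intro q; simp [Φ]
  have hΦinj : Function.Injective Φ := by
    rw [← LinearMap.ker_eq_bot, LinearMap.ker_eq_bot']
    intro q hq
    rw [hΦ] at hq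
    funext i
    exact Subtype.ext (L.indep hinj hrk hred v hv a ha (fun i => (q i).1)
      (fun i => L.mem_span_p.1 (q i).2) hq i)
  have hrange : LinearMap.range Φ = Submodule.span R (S : Set (ι → R)) := by
    apply le_antisymm
    · rintro _ ⟨q, rfl⟩
      rw [hΦ]
      exact sum_mem fun i _ => Submodule.smul_mem _ _ (Submodule.subset_span i.2)
    · refine Submodule.span_le.2 fun z hz => ?_
      refine ⟨Pi.single ⟨z, hz⟩ ⟨L.p (v ⟨z, hz⟩), Submodule.mem_span_singleton_self _⟩, ?_⟩
      rw [hΦ, Finset.sum_eq_single ⟨z, hz⟩]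
      · simpa using hv ⟨z, hz⟩
      · intro i _ hi
        rw [Pi.single_eq_of_ne hi]
        simp
      · simp
  exact ⟨S, inferInstance, v, ⟨(LinearEquiv.ofEq _ _ hrange.symm).trans
    (LinearEquiv.ofInjective Φ hΦinj).symm⟩⟩

theorem exists_equiv_of_projective (Q : Type) [AddCommGroup Q] [Module R Q] [Module.Finite R Q]
    [Module.Projective R Q] : ∃ (I : Type) (_ : Fintype I) (f : I → G.V),
      Nonempty (Q ≃ₗ[R] ((i : I) → Submodule.span R {L.p (f i)})) := by
  obtain ⟨n, g, h, _, hh, hgh⟩ := Module.Finite.exists_comp_eq_id_of_projective R Q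
  have hfg : (LinearMap.range h).FG := by
    rw [LinearMap.range_eq_map]
    exact (Module.Finite.fg_top (R := R) (M := Q)).map h
  obtain ⟨I, hI, f, ⟨φ⟩⟩ := L.exists_equiv_of_fg _ hfg
  exact ⟨I, hI, f, ⟨(LinearEquiv.ofInjective h hh).trans φ⟩⟩

/-- For a regular vertex `v`, the Cuntz–Krieger relation gives `R v ≅ ⊕ R r(e)` over the edges `e`
leaving `v`, by right multiplication with the edges and ghost edges. -/
noncomputable def equivOut (v : G.V) (hv : G.IsRegular v) :
    Submodule.span R {L.p v} ≃ₗ[R]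
      ((e : {e : G.E // G.s e = v}) → Submodule.span R {L.p (G.r e.1)}) where
  toFun a := fun e => ⟨a.1 * L.x e.1, L.mem_span_p.2 (by rw [mul_assoc, L.x_p])⟩
  map_add' a b := by ext e; simp [add_mul]
  map_smul' c a := by ext e; simp [mul_assoc]
  invFun b := ⟨∑ e : {e : G.E // G.s e = v}, (b e).1 * L.y e.1, L.mem_span_p.2 (by
    rw [Finset.sum_mul]
    refine Finset.sum_congr rfl fun e _ => ?_
    rw [mul_assoc, L.ghost_p, if_pos e.2])⟩
  left_inv a := by
    ext
    simp only [mul_assoc]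
    rw [← Finset.mul_sum]
    have : ∑ e : {e : G.E // G.s e = v}, L.x e.1 * L.y e.1 = L.p v := by
      rw [L.ck v hv, ← Finset.sum_subtype_of_mem (p := fun e => G.s e = v)
        (fun e => L.x e * L.y e) (by simp)]
      refine Finset.sum_congr ?_ fun _ _ => rfl
      ext e
      simp [e.2]
    rw [this]
    exact L.mem_span_p.1 a.2
  right_inv b := by
    ext e
    simp only [Finset.sum_mul, mul_assoc, L.y_x]
    rw [Finset.sum_eq_single e]
    · rw [if_pos rfl]
      exact L.mem_span_p.1 (b e).2
    · intro f _ hf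
      rw [if_neg (fun h => hf (Subtype.ext h)), mul_zero]
    · simp

end LeavittFamily

/-! ### A representation separating ghost paths -/

/-- For every vertex, the maps `Φ e` of the edges leaving it are injective with disjoint ranges. -/
def BranchInj (G : FinGraph) (Φ : G.E → ℕ → ℕ) : Prop :=
  ∀ e f m k, G.s e = G.s f → Φ e m = Φ f k → e = f ∧ m = k

/-- For every regular vertex, the ranges of the maps `Φ e` of the edges leaving it cover `ℕ`. -/
def BranchSurj (G : FinGraph) (Φ : G.E → ℕ → ℕ) : Prop :=
  ∀ v, G.IsRegular v → ∀ k, ∃ e m, G.s e = v ∧ Φ e m = k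

lemma exists_branching (G : FinGraph) : ∃ Φ : G.E → ℕ → ℕ, BranchInj G Φ ∧ BranchSurj G Φ := by
  have h : ∀ v, ∃ φ : {e : G.E // G.s e = v} × ℕ → ℕ, Function.Injective φ ∧
      (G.IsRegular v → Function.Surjective φ) := by
    intro v
    by_cases hv : G.IsRegular v
    · obtain ⟨e, he⟩ := hv
      have : Nonempty {e : G.E // G.s e = v} := ⟨⟨e, he⟩⟩
      obtain ⟨φ⟩ := nonempty_equiv_of_countable (α := {e : G.E // G.s e = v} × ℕ) (β := ℕ)
      exact ⟨φ, φ.injective, fun _ => φ.surjective⟩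
    · exact ⟨fun _ => 0, fun q => absurd ⟨q.1.1, q.1.2⟩ hv, fun h => absurd h hv⟩
  choose φ hinj hsurj using h
  refine ⟨fun e m => φ (G.s e) (⟨e, rfl⟩, m), ?_, ?_⟩
  · intro e f m k hs h
    have : ∀ (w : G.V) (hw : G.s e = w) , φ (G.s e) (⟨e, rfl⟩, m) = φ w (⟨e, hw⟩, m) := by
      rintro w rfl; rfl
    simp only [this _ hs] at h
    have := hinj _ h
    simpa using this
  · intro v hv k
    obtain ⟨⟨⟨e, rfl⟩, m⟩, h⟩ := hsurj v hv k
    exact ⟨e, m, rfl, h⟩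

section Rep

variable (K : Type) [Field K] (G : FinGraph) (Φ : G.E → ℕ → ℕ)

/-- The action of a vertex on the space with basis `V × ℕ × ℤ`: the projection onto the basis vectors
over `v`. The integer records a degree, which edges raise and ghost edges lower by one. -/
noncomputable def repVert (v : G.V) : Module.End K (G.V × ℕ × ℤ →₀ K) :=
  Finsupp.linearCombination K fun q => if q.1 = v then Finsupp.single q 1 else 0

/-- The action of an edge: it maps the basis vectors over `r e` injectively to basis vectors over
`s e`, through `Φ e`. -/
noncomputable def repEdge (e : G.E) : Module.End K (G.V × ℕ × ℤ →₀ K) :=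
  Finsupp.linearCombination K fun q =>
    if q.1 = G.r e then Finsupp.single (G.s e, Φ e q.2.1, q.2.2 + 1) 1 else 0

open Classical in
/-- The action of a ghost edge, the partial inverse of the action of the edge. -/
noncomputable def repGhost (e : G.E) : Module.End K (G.V × ℕ × ℤ →₀ K) :=
  Finsupp.linearCombination K fun q =>
    if h : q.1 = G.s e ∧ ∃ m, Φ e m = q.2.1 then
      Finsupp.single (G.r e, h.2.choose, q.2.2 - 1) 1 else 0

variable {K G Φ}

lemma repVert_single (v : G.V) (q : G.V × ℕ × ℤ) : repVert K G v (Finsupp.single q 1) =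
    if q.1 = v then Finsupp.single q 1 else 0 := by
  simp [repVert]

lemma repEdge_single (e : G.E) (q : G.V × ℕ × ℤ) : repEdge K G Φ e (Finsupp.single q 1) =
    if q.1 = G.r e then Finsupp.single (G.s e, Φ e q.2.1, q.2.2 + 1) 1 else 0 := by
  simp [repEdge]

lemma repGhost_single_of_ne (e : G.E) (q : G.V × ℕ × ℤ) (h : q.1 ≠ G.s e) :
    repGhost K G Φ e (Finsupp.single q 1) = 0 := by
  simp [repGhost, h]

lemma repGhost_single (hinj : BranchInj G Φ) (e f : G.E) (m : ℕ) (k : ℤ) :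
    repGhost K G Φ e (Finsupp.single (G.s f, Φ f m, k) 1) =
      if e = f then Finsupp.single (G.r e, m, k - 1) 1 else 0 := by
  classical
  rw [repGhost, Finsupp.linearCombination_single, one_smul]
  by_cases h : e = f
  · subst h
    have hex : G.s e = G.s e ∧ ∃ m', Φ e m' = Φ e m := ⟨rfl, m, rfl⟩
    rw [dif_pos hex, if_pos rfl, (hinj e e _ _ rfl hex.2.choose_spec).2]
  · rw [dif_neg, if_neg h]
    rintro ⟨h1, m', h2⟩
    exact h (hinj e f m' m h1.symm h2).1

/-- The representation of the Leavitt path algebra defined by a branching system `Φ`. -/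
noncomputable def repHom (hinj : BranchInj G Φ) (hsurj : BranchSurj G Φ) :
    LeavittPathAlgebra K G →ₐ[K] Module.End K (G.V × ℕ × ℤ →₀ K) :=
  RingQuot.liftAlgHom K ⟨FreeAlgebra.lift K fun g => match g with
    | .vert v => repVert K G v
    | .edge e => repEdge K G Φ e
    | .ghost e => repGhost K G Φ e, by
    have hcase : ∀ (q : G.V × ℕ × ℤ), (¬ G.IsRegular q.1) ∨ ∃ e m k, q = (G.s e, Φ e m, k) := by
      rintro ⟨v, k, z⟩
      by_cases hv : G.IsRegular v
      · obtain ⟨e, m, rfl, rfl⟩ := hsurj v hv k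
        exact Or.inr ⟨e, m, z, rfl⟩
      · exact Or.inl hv
    have hsink : ∀ (q : G.V × ℕ × ℤ), ¬ G.IsRegular q.1 → ∀ e,
        repGhost K G Φ e (Finsupp.single q 1) = 0 := fun q hq e =>
      repGhost_single_of_ne e q fun h => hq ⟨e, h.symm⟩
    intro a b h
    induction h with
    | vertMul v w =>
      rw [map_mul, FreeAlgebra.lift_ι_apply, FreeAlgebra.lift_ι_apply,
        apply_ite (FreeAlgebra.lift K _),
        FreeAlgebra.lift_ι_apply, map_zero]
      ext1 q; ext1
      simp only [LinearMap.comp_apply, Finsupp.lsingle_apply, Module.End.mul_apply, repVert_single]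
      by_cases h1 : v = w <;> by_cases h2 : q.1 = w <;> simp_all [repVert_single]
      simp [Ne.symm h1]
    | edgeLeft e =>
      rw [map_mul, FreeAlgebra.lift_ι_apply, FreeAlgebra.lift_ι_apply]
      ext1 q; ext1
      simp only [LinearMap.comp_apply, Finsupp.lsingle_apply, Module.End.mul_apply, repEdge_single]
      split_ifs <;> simp [repVert_single]
    | edgeRight e =>
      rw [map_mul, FreeAlgebra.lift_ι_apply, FreeAlgebra.lift_ι_apply]
      ext1 q; ext1
      simp only [LinearMap.comp_apply, Finsupp.lsingle_apply, Module.End.mul_apply, repVert_single]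
      split_ifs with h <;> simp [repEdge_single, h]
    | ghostLeft e =>
      rw [map_mul, FreeAlgebra.lift_ι_apply, FreeAlgebra.lift_ι_apply]
      ext1 q; ext1
      simp only [LinearMap.comp_apply, Finsupp.lsingle_apply, Module.End.mul_apply]
      rcases hcase q with hq | ⟨f, m, k, rfl⟩
      · rw [hsink q hq, map_zero]
      · rw [repGhost_single hinj]
        split_ifs <;> simp [repVert_single]
    | ghostRight e =>
      rw [map_mul, FreeAlgebra.lift_ι_apply, FreeAlgebra.lift_ι_apply]
      ext1 q; ext1
      simp only [LinearMap.comp_apply, Finsupp.lsingle_apply, Module.End.mul_apply, repVert_single]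
      split_ifs with h
      · rfl
      · rw [map_zero, repGhost_single_of_ne e q h]
    | ghostEdge e f =>
      rw [map_mul, FreeAlgebra.lift_ι_apply, FreeAlgebra.lift_ι_apply,
        apply_ite (FreeAlgebra.lift K _),
        FreeAlgebra.lift_ι_apply, map_zero]
      ext1 q; ext1
      simp only [LinearMap.comp_apply, Finsupp.lsingle_apply, Module.End.mul_apply, repEdge_single]
      by_cases h1 : e = f
      · subst h1
        rw [if_pos rfl, repVert_single]
        split_ifs with h2
        · rw [repGhost_single hinj, if_pos rfl, ← h2]
          simp
        · rw [map_zero]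
      · rw [if_neg h1]
        split_ifs with h2
        · rw [repGhost_single hinj, if_neg h1]; rfl
        · simp
    | cuntzKrieger v hv =>
      rw [map_sum, FreeAlgebra.lift_ι_apply]
      simp only [map_mul, FreeAlgebra.lift_ι_apply]
      ext1 q; ext1
      simp only [LinearMap.comp_apply, Finsupp.lsingle_apply, LinearMap.sum_apply,
        Module.End.mul_apply, repVert_single]
      split_ifs with h
      · rcases hcase q with hq | ⟨f, m, k, rfl⟩
        · exact absurd (h ▸ hv) hq
        · rw [Finset.sum_eq_single f]
          · rw [repGhost_single hinj, if_pos rfl, repEdge_single, if_pos rfl]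
            simp
          · intro e _ he
            rw [repGhost_single hinj, if_neg he, map_zero]
          · intro hf
            exact absurd (by simpa using h) hf
      · refine (Finset.sum_eq_zero fun e he => ?_).symm
        rw [repGhost_single_of_ne e q, map_zero]
        rw [(Finset.mem_filter.1 he).2]
        exact h
    | unit =>
      rw [map_sum, map_one]
      simp only [FreeAlgebra.lift_ι_apply]
      ext1 q; ext1
      simp [repVert_single]⟩

lemma repHom_vert (hinj : BranchInj G Φ) (hsurj : BranchSurj G Φ) (v : G.V) :
    repHom hinj hsurj (LeavittPathAlgebra.vert K G v) = repVert K G v := by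
  simp [repHom, LeavittPathAlgebra.vert]

lemma repHom_ghost (hinj : BranchInj G Φ) (hsurj : BranchSurj G Φ) (e : G.E) :
    repHom hinj hsurj (LeavittPathAlgebra.ghost K G e) = repGhost K G Φ e := by
  simp [repHom, LeavittPathAlgebra.ghost]

lemma repHom_ghostProd (hinj : BranchInj G Φ) (hsurj : BranchSurj G Φ) (l : List G.E) :
    repHom hinj hsurj (ghostProd (LeavittPathAlgebra.ghost K G) l) =
      ghostProd (repGhost K G Φ) l := by
  induction l with
  | nil => simp [ghostProd]
  | cons e l ih => rw [ghostProd, map_mul, ih, repHom_ghost]; rfl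

/-- Every ghost path acts nontrivially on some basis vector over its base vertex. -/
lemma exists_ghostProd_single (hinj : BranchInj G Φ) (v : G.V) (l : List G.E)
    (hl : IsPathFrom v l) (m : ℕ) :
    ∃ m₀ : ℕ, ghostProd (repGhost K G Φ) l (Finsupp.single (v, m₀, 0) 1) =
      Finsupp.single (pathEnd v l, m, -(l.length : ℤ)) 1 := by
  induction l generalizing m with
  | nil => exact ⟨m, by simp [ghostProd, pathEnd]⟩
  | cons e l ih =>
    obtain ⟨m₀, h⟩ := ih hl.1 (Φ e m)
    refine ⟨m₀, ?_⟩
    rw [ghostProd, Module.End.mul_apply, h, ← hl.2, repGhost_single hinj, if_pos rfl, pathEnd,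
      List.length_cons]
    congr 3
    push_cast
    ring

lemma exists_of_repGhost_ne_zero {e : G.E} {q : G.V × ℕ × ℤ}
    (h : repGhost K G Φ e (Finsupp.single q 1) ≠ 0) : ∃ m k, q = (G.s e, Φ e m, k) := by
  classical
  by_contra hcon
  apply h
  rw [repGhost, Finsupp.linearCombination_single, one_smul, dif_neg]
  rintro ⟨h1, m, h2⟩
  exact hcon ⟨m, q.2.2, by rw [← h1, h2]⟩

lemma ghostProd_single_eq_single (hinj : BranchInj G Φ) {l : List G.E} {q : G.V × ℕ × ℤ}
    (h : ghostProd (repGhost K G Φ) l (Finsupp.single q 1) ≠ 0) :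
    ∃ q' : G.V × ℕ × ℤ, ghostProd (repGhost K G Φ) l (Finsupp.single q 1) = Finsupp.single q' 1 ∧
      q'.2.2 = q.2.2 - l.length := by
  induction l with
  | nil => exact ⟨q, by simp [ghostProd], by simp⟩
  | cons e l ih =>
    rw [ghostProd, Module.End.mul_apply] at h ⊢
    obtain ⟨q', h1, h2⟩ := ih fun h0 => h (by rw [h0, map_zero])
    rw [h1] at h ⊢
    obtain ⟨m, k, rfl⟩ := exists_of_repGhost_ne_zero h
    refine ⟨(G.r e, m, k - 1), by rw [repGhost_single hinj, if_pos rfl], ?_⟩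
    simp only at h2
    rw [h2, List.length_cons]
    push_cast
    ring

/-- At most one ghost path of a given length acts nontrivially on a given basis vector. -/
lemma ghostProd_single_inj (hinj : BranchInj G Φ) {l l' : List G.E} {q : G.V × ℕ × ℤ}
    (hlen : l.length = l'.length)
    (h : ghostProd (repGhost K G Φ) l (Finsupp.single q 1) ≠ 0)
    (h' : ghostProd (repGhost K G Φ) l' (Finsupp.single q 1) ≠ 0) : l = l' := by
  induction l generalizing l' with
  | nil => exact (List.length_eq_zero_iff.1 hlen.symm).symm
  | cons e l ih =>
    cases l' with
    | nil => simp at hlen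
    | cons f l' =>
      rw [ghostProd, Module.End.mul_apply] at h h'
      have h1 : ghostProd (repGhost K G Φ) l (Finsupp.single q 1) ≠ 0 := fun h0 => h (by rw [h0, map_zero])
      have h1' : ghostProd (repGhost K G Φ) l' (Finsupp.single q 1) ≠ 0 := fun h0 => h' (by rw [h0, map_zero])
      obtain rfl := ih (by simpa using hlen) h1 h1'
      obtain ⟨q', hq, _⟩ := ghostProd_single_eq_single hinj h1
      rw [hq] at h h'
      obtain ⟨m, k, rfl⟩ := exists_of_repGhost_ne_zero h
      rw [repGhost_single hinj] at h'
      rw [(ite_ne_right_iff.1 h').1]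

end Rep

/-- A functional separating a ghost path from all other ghost monomials: a matrix coefficient of the
representation. The base vertex and the length of the other monomial are detected by the first and
the last component of the basis vectors, and the edges by `ghostProd_single_inj`. -/
lemma exists_separating (K : Type) [Field K] (G : FinGraph) (v : G.V) (l : List G.E)
    (hl : IsPathFrom v l) : ∃ φ : LeavittPathAlgebra K G →ₗ[K] K,
      φ (ghostProd (LeavittPathAlgebra.ghost K G) l * LeavittPathAlgebra.vert K G v) ≠ 0 ∧
      ∀ v' l', (v', l') ≠ (v, l) →
        φ (ghostProd (LeavittPathAlgebra.ghost K G) l' * LeavittPathAlgebra.vert K G v') = 0 := by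
  obtain ⟨Φ, hinj, hsurj⟩ := exists_branching G
  obtain ⟨m₀, hm⟩ := exists_ghostProd_single (K := K) hinj v l hl 0
  have hne : ghostProd (repGhost K G Φ) l (Finsupp.single (v, m₀, 0) 1) ≠ 0 := by
    rw [hm]; simp
  refine ⟨Finsupp.lapply (pathEnd v l, 0, -(l.length : ℤ)) ∘ₗ
    LinearMap.applyₗ (Finsupp.single (v, m₀, 0) 1) ∘ₗ (repHom (K := K) hinj hsurj).toLinearMap, ?_, ?_⟩
  · simp [repHom_ghostProd, repHom_vert, repVert_single, hm]
  · intro v' l' hvl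
    simp only [LinearMap.comp_apply, AlgHom.toLinearMap_apply, map_mul, repHom_ghostProd,
      repHom_vert, LinearMap.applyₗ_apply_apply, Module.End.mul_apply, repVert_single,
      Finsupp.lapply_apply]
    split_ifs with hv
    · subst hv
      by_cases h0 : ghostProd (repGhost K G Φ) l' (Finsupp.single (v, m₀, 0) 1) = 0
      · rw [h0]; rfl
      · obtain ⟨q', hq, hdeg⟩ := ghostProd_single_eq_single hinj h0
        rw [hq, Finsupp.single_apply, if_neg]
        rintro rfl
        refine hvl ?_
        rw [ghostProd_single_inj hinj ?_ hne h0]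
        simp only at hdeg
        omega
    · simp

/-- The canonical generators of `L_K(G)`. -/
noncomputable def leavittFamily (K : Type) [Field K] (G : FinGraph) :
    LeavittFamily K G (LeavittPathAlgebra K G) where
  p := LeavittPathAlgebra.vert K G
  x := LeavittPathAlgebra.edge K G
  y := LeavittPathAlgebra.ghost K G
  p_mul v w := by
    have := RingQuot.mkAlgHom_rel K (LeavittRel.vertMul (K := K) v w)
    rwa [map_mul, apply_ite (RingQuot.mkAlgHom K (LeavittRel K G)), map_zero] at this
  p_x e := by
    have := RingQuot.mkAlgHom_rel K (LeavittRel.edgeLeft (K := K) e)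
    rwa [map_mul] at this
  x_p e := by
    have := RingQuot.mkAlgHom_rel K (LeavittRel.edgeRight (K := K) e)
    rwa [map_mul] at this
  p_y e := by
    have := RingQuot.mkAlgHom_rel K (LeavittRel.ghostLeft (K := K) e)
    rwa [map_mul] at this
  y_p e := by
    have := RingQuot.mkAlgHom_rel K (LeavittRel.ghostRight (K := K) e)
    rwa [map_mul] at this
  y_x e f := by
    have := RingQuot.mkAlgHom_rel K (LeavittRel.ghostEdge (K := K) e f)
    rwa [map_mul, apply_ite (RingQuot.mkAlgHom K (LeavittRel K G)), map_zero] at this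
  ck v hv := by
    have := RingQuot.mkAlgHom_rel K (LeavittRel.cuntzKrieger (K := K) v hv)
    simp only [map_sum, map_mul] at this
    exact this
  sum_p := by
    have := RingQuot.mkAlgHom_rel K (LeavittRel.unit (K := K) (G := G))
    rwa [map_sum, map_one] at this
  gen S h1 hp hx hy a := by
    obtain ⟨b, rfl⟩ := RingQuot.mkAlgHom_surjective K (LeavittRel K G) a
    suffices h : ∀ c ∈ S, RingQuot.mkAlgHom K (LeavittRel K G) b * c ∈ S by
      simpa using h 1 h1
    induction b using FreeAlgebra.induction with
    | grade0 r =>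
      intro c hc
      rw [AlgHom.commutes, ← Algebra.smul_def]
      exact S.smul_mem r hc
    | grade1 g =>
      intro c hc
      cases g with
      | vert v => exact hp c hc v
      | edge e => exact hx c hc e
      | ghost e => exact hy c hc e
    | mul a b ha hb =>
      intro c hc
      rw [map_mul, mul_assoc]
      exact ha _ (hb _ hc)
    | add a b ha hb =>
      intro c hc
      rw [map_add, add_mul]
      exact S.add_mem (ha _ hc) (hb _ hc)
  sep := exists_separating K G

/-! ### Combinatorics of vertex modules of a hair extension -/

/-- The left ideal `L_K(G) w` generated by a vertex. -/
abbrev vertexModule (K : Type) [Field K] (G : FinGraph) (w : G.V) :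
    Submodule (LeavittPathAlgebra K G) (LeavittPathAlgebra K G) :=
  Submodule.span (LeavittPathAlgebra K G) {LeavittPathAlgebra.vert K G w}

lemma vertexModule_equiv_out (K : Type) [Field K] {G : FinGraph} (w : G.V) (hw : G.IsRegular w) :
    Nonempty (vertexModule K G w ≃ₗ[LeavittPathAlgebra K G]
      ((e : {e : G.E // G.s e = w}) → vertexModule K G (G.r e.1))) :=
  ⟨(leavittFamily K G).equivOut w hw⟩

lemma vertexModule_equiv_of_unique (K : Type) [Field K] {G : FinGraph} (w : G.V) (e₀ : G.E)
    (h₀ : G.s e₀ = w) (hu : ∀ e, G.s e = w → e = e₀) :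
    Nonempty (vertexModule K G w ≃ₗ[LeavittPathAlgebra K G] vertexModule K G (G.r e₀)) := by
  let _ : Unique {e : G.E // G.s e = w} := ⟨⟨⟨e₀, h₀⟩⟩, fun e => Subtype.ext (hu _ e.2)⟩
  obtain ⟨φ⟩ := vertexModule_equiv_out K w ⟨e₀, h₀⟩
  exact ⟨φ.trans (LinearEquiv.piUnique (LeavittPathAlgebra K G)
    fun e : {e : G.E // G.s e = w} => vertexModule K G (G.r e.1))⟩

/-- Each vertex on the strand attached to `u` emits a single edge, the next one of the strand, so
all vertex modules along the strand are isomorphic to the one of `u`. -/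
lemma strand_equiv (K : Type) [Field K] (F : FinGraph) (n : F.V → ℕ) (u : F.V) (k : ℕ)
    (hk : k < n u - 1) :
    Nonempty (vertexModule K (F.hairExtension n) (Sum.inr ⟨u, ⟨k, hk⟩⟩)
      ≃ₗ[LeavittPathAlgebra K (F.hairExtension n)]
      vertexModule K (F.hairExtension n) (Sum.inl u)) := by
  have step : ∀ k (hk : k < n u - 1), ∀ w,
      (F.hairExtension n).r (Sum.inr ⟨u, ⟨k, hk⟩⟩) = w →
      Nonempty (vertexModule K (F.hairExtension n) (Sum.inr ⟨u, ⟨k, hk⟩⟩)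
        ≃ₗ[LeavittPathAlgebra K (F.hairExtension n)] vertexModule K (F.hairExtension n) w) := by
    rintro k hk w rfl
    refine vertexModule_equiv_of_unique K _ _ rfl ?_
    rintro (e | e) he
    · exact absurd he Sum.inl_ne_inr
    · exact congrArg Sum.inr (Sum.inr_injective he)
  induction k with
  | zero => exact step 0 hk _ (by simp [FinGraph.hairExtension])
  | succ k ih =>
    obtain ⟨φ⟩ := step (k + 1) hk (Sum.inr ⟨u, ⟨k, by omega⟩⟩) (by
      simp [FinGraph.hairExtension])
    obtain ⟨ψ⟩ := ih (by omega)
    exact ⟨φ.trans ψ⟩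

lemma hair_vertex_equiv (K : Type) [Field K] (F : FinGraph) (n : F.V → ℕ)
    (w : (F.hairExtension n).V) :
    ∃ u : F.V, Nonempty (vertexModule K (F.hairExtension n) w
      ≃ₗ[LeavittPathAlgebra K (F.hairExtension n)]
      vertexModule K (F.hairExtension n) (Sum.inl u)) := by
  rcases w with u | ⟨u, k, hk⟩
  · exact ⟨u, ⟨LinearEquiv.refl _ _⟩⟩
  · exact ⟨u, strand_equiv K F n u k hk⟩

/-- One expansion step: in a totally looped graph the vertex module of `v` is a finite direct sum
of vertex modules in which both `v` itself and all out-neighbours of `v` occur. For a sink this is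
the trivial decomposition, for a regular vertex the one indexed by the edges leaving `v`, where
`v` occurs because of a loop. -/
lemma exists_expansion (K : Type) [Field K] (F : FinGraph) (hF : F.TotallyLooped) (n : F.V → ℕ)
    (v : F.V) : ∃ (A : Type) (_ : Fintype A) (g : A → F.V),
      Nonempty (vertexModule K (F.hairExtension n) (Sum.inl v)
        ≃ₗ[LeavittPathAlgebra K (F.hairExtension n)]
        ((a : A) → vertexModule K (F.hairExtension n) (Sum.inl (g a)))) ∧
      (∃ a, g a = v) ∧ ∀ e, F.s e = v → ∃ a, g a = F.r e := by
  by_cases hv : F.IsRegular v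
  · have _ : Finite {e : (F.hairExtension n).E // (F.hairExtension n).s e = Sum.inl v} :=
      Subtype.finite
    have hreg : (F.hairExtension n).IsRegular (Sum.inl v) :=
      hv.imp' Sum.inl fun e he => congrArg Sum.inl he
    have hr : ∀ e : {e : (F.hairExtension n).E // (F.hairExtension n).s e = Sum.inl v},
        ∃ u : F.V, (F.hairExtension n).r e.1 = Sum.inl u := by
      rintro ⟨e | e, he⟩
      · exact ⟨F.r e, rfl⟩
      · exact absurd he Sum.inr_ne_inl
    choose g hg using hr
    obtain ⟨φ⟩ := vertexModule_equiv_out K _ hreg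
    have hout : ∀ e, F.s e = v → ∃ a, g a = F.r e := fun e he =>
      ⟨⟨Sum.inl e, congrArg Sum.inl he⟩, Sum.inl_injective (hg _).symm⟩
    refine ⟨_, Fintype.ofFinite _, g, ⟨φ.trans (LinearEquiv.piCongrRight fun e =>
      LinearEquiv.ofEq _ _ (by rw [hg e]))⟩, ?_, hout⟩
    obtain ⟨e, hs, hr⟩ := hF v hv
    exact (hout e hs).imp fun a ha => ha.trans hr
  · refine ⟨Unit, inferInstance, fun _ => v, ⟨(LinearEquiv.funUnique Unit _ _).symm⟩, ⟨(), rfl⟩,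
      fun e he => absurd ⟨e, he⟩ hv⟩

/-- Collecting equal indices: a finite direct sum of members of a family of modules, written with
multiplicities over the set of members which occur. -/
lemma exists_multiplicities {R V Q : Type} [Ring R] [Fintype V] [DecidableEq V]
    [AddCommGroup Q] [Module R Q] (M : V → Submodule R R) {I : Type} [Fintype I] (f : I → V)
    (φ : Q ≃ₗ[R] ((i : I) → M (f i))) :
    ∃ m : {v : V // v ∈ Finset.univ.image f} → ℕ, (∀ v, 0 < m v) ∧
      Nonempty (Q ≃ₗ[R] ((v : {v : V // v ∈ Finset.univ.image f}) → Fin (m v) → M v.1)) := by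
  classical
  let f' : I → {v : V // v ∈ Finset.univ.image f} := fun i =>
    ⟨f i, Finset.mem_image_of_mem f (Finset.mem_univ i)⟩
  refine ⟨fun v => Fintype.card {i // f' i = v}, ?_, ?_⟩
  · rintro ⟨v, hv⟩
    obtain ⟨i, -, rfl⟩ := Finset.mem_image.1 hv
    exact Fintype.card_pos_iff.2 ⟨⟨i, rfl⟩⟩
  · let σ : (Σ v, Fin (Fintype.card {i // f' i = v})) ≃ I :=
      (Equiv.sigmaCongrRight fun v => (Fintype.equivFin {i // f' i = v}).symm).trans
        (Equiv.sigmaFiberEquiv f')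
    have hσ : ∀ x, f (σ x) = x.1.1 := fun x =>
      congrArg Subtype.val ((Fintype.equivFin {i // f' i = x.1}).symm x.2).2
    let ψ := LinearEquiv.piCongrLeft R (fun i => M (f i)) σ
    let χ : ((x : Σ v, Fin (Fintype.card {i // f' i = v})) → M (f (σ x))) ≃ₗ[R]
        ((x : Σ v, Fin (Fintype.card {i // f' i = v})) → M x.1.1) :=
      LinearEquiv.piCongrRight fun x => LinearEquiv.ofEq _ _ (by rw [hσ])
    exact ⟨φ.trans (ψ.symm.trans (χ.trans (LinearEquiv.piCurry R
      fun (v : {v : V // v ∈ Finset.univ.image f})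
        (_ : Fin (Fintype.card {i // f' i = v})) => M v.1)))⟩

/-- Every nonzero finitely generated projective module over the Leavitt
path algebra of a hair extension of a totally looped graph `F` is isomorphic to a direct
sum `⊕_{i=1}^u m_i · L_K(E) v_{j_i}` over a hereditary subset `T = {v_{j_1}, …, v_{j_u}}`
of `F⁰`. -/
theorem hair_projective_decomposition (K : Type) [Field K] (F : FinGraph)
    (hF : F.TotallyLooped) (n : F.V → ℕ) (hn : ∀ v, 0 < n v)
    (Q : Type) [AddCommGroup Q] [Module (LeavittPathAlgebra K (F.hairExtension n)) Q]
    [Nontrivial Q] [Module.Finite (LeavittPathAlgebra K (F.hairExtension n)) Q]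
    [Module.Projective (LeavittPathAlgebra K (F.hairExtension n)) Q] :
    ∃ T : Finset F.V, F.Hereditary T ∧ T.Nonempty ∧
      ∃ m : {v : F.V // v ∈ T} → ℕ, (∀ v, 0 < m v) ∧
        Nonempty (Q ≃ₗ[LeavittPathAlgebra K (F.hairExtension n)]
          ((v : {v : F.V // v ∈ T}) → Fin (m v) →
            ↥(Submodule.span (LeavittPathAlgebra K (F.hairExtension n))
              {LeavittPathAlgebra.vert K (F.hairExtension n) (Sum.inl v.1)}))) := by
  classical
  -- `D f` says that `Q` is the direct sum of the vertex modules of the values of `f`.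
  let D : (I : Type) → (I → F.V) → Prop := fun I f =>
    Nonempty (Q ≃ₗ[LeavittPathAlgebra K (F.hairExtension n)]
      ((i : I) → vertexModule K (F.hairExtension n) (Sum.inl (f i))))
  have h0 : ∃ (I : Type) (_ : Fintype I) (f : I → F.V), D I f := by
    obtain ⟨I, hI, f, ⟨φ⟩⟩ := (leavittFamily K (F.hairExtension n)).exists_equiv_of_projective Q
    choose u hu using hair_vertex_equiv K F n
    exact ⟨I, hI, fun i => u (f i), ⟨φ.trans (LinearEquiv.piCongrRight fun i => (hu (f i)).some)⟩⟩
  choose A hA g hg hself hout using exists_expansion K F hF n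
  have hexp : ∀ (I : Type) (f : I → F.V), D I f →
      D (Σ i, A (f i)) (fun x => g (f x.1) x.2) := by
    rintro I f ⟨φ⟩
    exact ⟨φ.trans ((LinearEquiv.piCongrRight fun i => (hg (f i)).some).trans
      (LinearEquiv.piCurry (LeavittPathAlgebra K (F.hairExtension n))
        fun (i : I) (a : A (f i)) =>
          vertexModule K (F.hairExtension n) (Sum.inl (g (f i) a))).symm)⟩
  -- A decomposition whose set of vertices has maximal size: expanding all summands cannot add a
  -- new vertex to it, so that this set contains all its out-neighbours.
  obtain ⟨T, ⟨I, hI, f, hD, rfl⟩, hmax⟩ : ∃ T : Finset F.V,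
      (∃ (I : Type) (_ : Fintype I) (f : I → F.V), D I f ∧ Finset.univ.image f = T) ∧
      ∀ T' : Finset F.V,
        (∃ (I : Type) (_ : Fintype I) (f : I → F.V), D I f ∧ Finset.univ.image f = T') →
        T'.card ≤ T.card := by
    obtain ⟨I, hI, f, hD⟩ := h0
    exact (Set.exists_max_image _ Finset.card (Set.toFinite
      {T : Finset F.V | ∃ (I : Type) (_ : Fintype I) (f : I → F.V),
        D I f ∧ Finset.univ.image f = T}) ⟨_, I, hI, f, hD, rfl⟩)
  have hT := hmax _ ⟨_, inferInstance, _, hexp I f hD, rfl⟩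
  have hsub : Finset.univ.image f ⊆
      Finset.univ.image (fun x : Σ i, A (f i) => g (f x.1) x.2) := by
    intro v hv
    obtain ⟨i, -, rfl⟩ := Finset.mem_image.1 hv
    obtain ⟨a, ha⟩ := hself (f i)
    exact Finset.mem_image.2 ⟨⟨i, a⟩, Finset.mem_univ _, ha⟩
  have heq := Finset.eq_of_subset_of_card_le hsub hT
  obtain ⟨φ⟩ := hD
  refine ⟨Finset.univ.image f, ?_, ?_, ?_⟩
  · intro e he
    obtain ⟨i, -, hi⟩ := Finset.mem_image.1 he
    obtain ⟨a, ha⟩ := hout (f i) e hi.symm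
    rw [heq]
    exact Finset.mem_image.2 ⟨⟨i, a⟩, Finset.mem_univ _, ha⟩
  · have : Nonempty I := by
      by_contra hne
      rw [not_nonempty_iff] at hne
      exact not_subsingleton Q φ.toEquiv.subsingleton
    exact Finset.univ_nonempty.image f
  · exact exists_multiplicities
      (fun v => vertexModule K (F.hairExtension n) (Sum.inl v)) f φ
end

section
/- Let K be any field, let F be a totally looped finite graph with F^0 = {v_1, ..., v_t}, let n_1, ..., n_t be positive integers, and let E denote the hair extension graph F^+(n_1, ..., n_t). If Q is a nonzero finitely generated projective left L_K(E)-module which is moreover a generator for the category of left L_K(E)-modules, then there exist positive integers m_v for every v ∈ F^0 such that Q ≅ ⊕_{v ∈ F^0} m_v · L_K(E) v as left L_K(E)-modules (where m · M denotes the direct sum of m copies of M). -/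
namespace HairDecomposition

open LeavittPathAlgebra

/-! ### The defining relations and the universal property -/

section Relations

variable {K : Type} [Field K] {G : FinGraph}

lemma vert_mul (v w : G.V) :
    vert K G v * vert K G w = if v = w then vert K G v else 0 := by
  have h := RingQuot.mkAlgHom_rel K (LeavittRel.vertMul (K := K) v w)
  rw [map_mul] at h
  rw [vert, vert, h]
  split_ifs <;> simp

lemma vert_mul_self (v : G.V) : vert K G v * vert K G v = vert K G v := by
  simp [vert_mul]

lemma vert_mul_edge (e : G.E) : vert K G (G.s e) * edge K G e = edge K G e := by
  have h := RingQuot.mkAlgHom_rel K (LeavittRel.edgeLeft (K := K) e)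
  rwa [map_mul] at h

lemma edge_mul_vert (e : G.E) : edge K G e * vert K G (G.r e) = edge K G e := by
  have h := RingQuot.mkAlgHom_rel K (LeavittRel.edgeRight (K := K) e)
  rwa [map_mul] at h

lemma vert_mul_ghost (e : G.E) : vert K G (G.r e) * ghost K G e = ghost K G e := by
  have h := RingQuot.mkAlgHom_rel K (LeavittRel.ghostLeft (K := K) e)
  rwa [map_mul] at h

lemma ghost_mul_vert (e : G.E) : ghost K G e * vert K G (G.s e) = ghost K G e := by
  have h := RingQuot.mkAlgHom_rel K (LeavittRel.ghostRight (K := K) e)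
  rwa [map_mul] at h

lemma ghost_mul_edge (e f : G.E) :
    ghost K G e * edge K G f = if e = f then vert K G (G.r e) else 0 := by
  have h := RingQuot.mkAlgHom_rel K (LeavittRel.ghostEdge (K := K) e f)
  rw [map_mul] at h
  rw [ghost, edge, h]
  split_ifs <;> simp [vert]

lemma vert_eq_sum (v : G.V) (hv : G.IsRegular v) :
    vert K G v = ∑ e ∈ Finset.univ.filter (fun e : G.E => G.s e = v),
      edge K G e * ghost K G e := by
  have h := RingQuot.mkAlgHom_rel K (LeavittRel.cuntzKrieger (K := K) v hv)
  simp only [map_sum, map_mul] at h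
  exact h

lemma one_eq_sum_vert : (1 : LeavittPathAlgebra K G) = ∑ v : G.V, vert K G v := by
  have h := RingQuot.mkAlgHom_rel K (LeavittRel.unit (K := K) (G := G))
  rw [map_sum, map_one] at h
  exact h

lemma vert_mul_edge_of_ne {v : G.V} {e : G.E} (h : v ≠ G.s e) :
    vert K G v * edge K G e = 0 := by
  rw [← vert_mul_edge, ← mul_assoc, vert_mul, if_neg h, zero_mul]

lemma vert_mul_ghost_of_ne {v : G.V} {e : G.E} (h : v ≠ G.r e) :
    vert K G v * ghost K G e = 0 := by
  rw [← vert_mul_ghost, ← mul_assoc, vert_mul, if_neg h, zero_mul]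

lemma ghost_mul_vert_of_ne {v : G.V} {e : G.E} (h : G.s e ≠ v) :
    ghost K G e * vert K G v = 0 := by
  rw [← ghost_mul_vert, mul_assoc, vert_mul, if_neg h, mul_zero]

open Classical in
/-- The unit is the sum of the sinks and of all the projections `e e*`. -/
lemma one_eq_sinks_add_edges : (1 : LeavittPathAlgebra K G) =
    (∑ v : G.V, if G.IsRegular v then 0 else vert K G v) +
      ∑ e : G.E, edge K G e * ghost K G e := by
  have h2 : ∑ e : G.E, edge K G e * ghost K G e =
      ∑ v : G.V, if G.IsRegular v then vert K G v else 0 := by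
    rw [← Finset.sum_fiberwise Finset.univ G.s]
    refine Finset.sum_congr rfl fun v _ => ?_
    split_ifs with hv
    · rw [vert_eq_sum v hv]
    · refine Finset.sum_eq_zero fun e he => (hv ⟨e, ?_⟩).elim
      simpa using he
  rw [h2, ← Finset.sum_add_distrib, one_eq_sum_vert]
  refine Finset.sum_congr rfl fun v _ => ?_
  split_ifs <;> simp

/-- The universal property of the Leavitt path algebra. -/
lemma exists_lift (B : Type) [Ring B] [Algebra K B] (pv : G.V → B) (pe pg : G.E → B)
    (h1 : ∀ v w, pv v * pv w = if v = w then pv v else 0)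
    (h2 : ∀ e, pv (G.s e) * pe e = pe e) (h3 : ∀ e, pe e * pv (G.r e) = pe e)
    (h4 : ∀ e, pv (G.r e) * pg e = pg e) (h5 : ∀ e, pg e * pv (G.s e) = pg e)
    (h6 : ∀ e f, pg e * pe f = if e = f then pv (G.r e) else 0)
    (h7 : ∀ v, G.IsRegular v →
      pv v = ∑ e ∈ Finset.univ.filter (fun e : G.E => G.s e = v), pe e * pg e)
    (h8 : 1 = ∑ v, pv v) :
    ∃ φ : LeavittPathAlgebra K G →ₐ[K] B, (∀ v, φ (vert K G v) = pv v) ∧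
      (∀ e, φ (edge K G e) = pe e) ∧ (∀ e, φ (ghost K G e) = pg e) := by
  let g : LPAGen G → B := fun x => match x with
    | LPAGen.vert v => pv v
    | LPAGen.edge e => pe e
    | LPAGen.ghost e => pg e
  have hg : ∀ ⦃x y⦄, LeavittRel K G x y → FreeAlgebra.lift K g x = FreeAlgebra.lift K g y := by
    intro x y h
    induction h with
    | vertMul v w =>
      rw [map_mul]
      split_ifs with hvw <;> simp [g, h1, hvw]
    | edgeLeft e => simp [g, h2]
    | edgeRight e => simp [g, h3]
    | ghostLeft e => simp [g, h4]
    | ghostRight e => simp [g, h5]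
    | ghostEdge e f =>
      rw [map_mul]
      split_ifs with hef <;> simp [g, h6, hef]
    | cuntzKrieger v hv => simp [g, map_sum, h7 v hv]
    | unit => simp [g, map_sum, h8]
  refine ⟨RingQuot.liftAlgHom K ⟨FreeAlgebra.lift K g, hg⟩, ?_, ?_, ?_⟩
  · intro v
    rw [vert, RingQuot.liftAlgHom_mkAlgHom_apply]; simp [g]
  · intro v
    rw [edge, RingQuot.liftAlgHom_mkAlgHom_apply]; simp [g]
  · intro v
    rw [ghost, RingQuot.liftAlgHom_mkAlgHom_apply]; simp [g]

end Relations

/-! ### Representations supported on a set of vertices -/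

section Representation

variable (K : Type) [Field K] {G : FinGraph}

/-- For every vertex `v` that emits an edge with range in `Z`, the maps `θ e` (for
`s e = v` and `r e ∈ Z`) decompose `ℕ` into disjoint copies of `ℕ`. -/
lemma exists_branching (Z : Set G.V) : ∃ θ : G.E → ℕ → ℕ,
    (∀ e e' j j', G.s e = G.s e' → G.r e ∈ Z → G.r e' ∈ Z → θ e j = θ e' j' → e = e' ∧ j = j') ∧
    (∀ v, (∃ e, G.s e = v ∧ G.r e ∈ Z) → ∀ i, ∃ e j, G.s e = v ∧ G.r e ∈ Z ∧ θ e j = i) := by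
  classical
  let T : G.V → Type := fun v => {e : G.E // G.s e = v ∧ G.r e ∈ Z}
  have hΨ : ∀ v, ∃ Ψ : T v × ℕ → ℕ, Function.Injective Ψ ∧
      (Nonempty (T v) → Function.Surjective Ψ) := by
    intro v
    by_cases hne : Nonempty (T v)
    · obtain ⟨d⟩ := nonempty_denumerable (T v × ℕ)
      exact ⟨(Denumerable.eqv (T v × ℕ)), Equiv.injective _, fun _ => Equiv.surjective _⟩
    · refine ⟨fun _ => 0, fun x => (hne ⟨x.1⟩).elim, fun h => (hne h).elim⟩
  choose Ψ hinj hsurj using hΨ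
  let θ : G.E → ℕ → ℕ := fun e j =>
    if h : G.r e ∈ Z then Ψ (G.s e) (⟨e, rfl, h⟩, j) else 0
  have hθ : ∀ e j v (hs : G.s e = v) (h : G.r e ∈ Z), θ e j = Ψ v (⟨e, hs, h⟩, j) := by
    intro e j v hs h
    subst hs
    simp [θ, h]
  refine ⟨θ, ?_, ?_⟩
  · intro e e' j j' hs h h' heq
    rw [hθ e j _ hs h, hθ e' j' _ rfl h'] at heq
    have := hinj _ heq
    simp only [Prod.mk.injEq] at this
    exact ⟨congrArg Subtype.val this.1, this.2⟩
  · rintro v ⟨e, hs, h⟩ i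
    obtain ⟨⟨⟨e', hs', h'⟩, j⟩, hi⟩ := hsurj v ⟨⟨e, hs, h⟩⟩ i
    exact ⟨e', j, hs', h', by rw [hθ e' j v hs' h', hi]⟩

open Classical in
/-- If the complement of `Z` is hereditary and saturated, then `L_K(G)` acts on a space where
exactly the vertices in `Z` act nontrivially.  The space is that of functions on `Z × ℕ`; an
edge `e` identifies the copy of `ℕ` over `r e` with a part of the copy over `s e`. -/
lemma exists_representation (Z : Set G.V) (hZ1 : ∀ e, G.r e ∈ Z → G.s e ∈ Z)
    (hZ2 : ∀ v ∈ Z, G.IsRegular v → ∃ e, G.s e = v ∧ G.r e ∈ Z) :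
    ∃ φ : LeavittPathAlgebra K G →ₐ[K] Module.End K (Z × ℕ → K),
      ∀ v, φ (vert K G v) = 0 ↔ v ∉ Z := by
  obtain ⟨θ, hinj, hsurj⟩ := exists_branching Z
  let enc : G.E → Z × ℕ → Z × ℕ := fun e y =>
    if h : G.s e ∈ Z then (⟨G.s e, h⟩, θ e y.2) else y
  have enc_fst : ∀ e y, (y.1 : G.V) = G.r e → ((enc e y).1 : G.V) = G.s e := by
    intro e y hy
    have : G.s e ∈ Z := hZ1 e (hy ▸ y.1.2)
    simp [enc, this]
  have enc_inj : ∀ e e' y y', (y.1 : G.V) = G.r e → (y'.1 : G.V) = G.r e' →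
      enc e y = enc e' y' → e = e' ∧ y = y' := by
    intro e e' y y' hy hy' h
    have hs : G.s e = G.s e' := by
      rw [← enc_fst e y hy, ← enc_fst e' y' hy', h]
    have hz : G.s e ∈ Z := hZ1 e (hy ▸ y.1.2)
    have hz' : G.s e' ∈ Z := hs ▸ hz
    have h2 : θ e y.2 = θ e' y'.2 := by
      have := congrArg Prod.snd h
      simpa [enc, hz, hz'] using this
    obtain ⟨h3, h4⟩ := hinj e e' _ _ hs (hy ▸ y.1.2) (hy' ▸ y'.1.2) h2
    refine ⟨h3, Prod.ext (Subtype.ext ?_) h4⟩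
    rw [hy, hy', h3]
  have enc_surj : ∀ x : Z × ℕ, G.IsRegular x.1 → ∃ e y, (y.1 : G.V) = G.r e ∧ enc e y = x := by
    rintro ⟨⟨v, hv⟩, i⟩ hreg
    obtain ⟨e, j, hs, hr, hi⟩ := hsurj v (hZ2 v hv hreg) i
    refine ⟨e, (⟨G.r e, hr⟩, j), rfl, ?_⟩
    subst hs
    simp [enc, hv, hi]
  let pv : G.V → Module.End K (Z × ℕ → K) := fun v =>
    { toFun := fun f x => if (x.1 : G.V) = v then f x else 0
      map_add' := by intro f g; ext x; simp only [Pi.add_apply]; split_ifs <;> simp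
      map_smul' := by intro c f; ext x; simp }
  let pe : G.E → Module.End K (Z × ℕ → K) := fun e =>
    { toFun := fun f x => if h : ∃ y : Z × ℕ, (y.1 : G.V) = G.r e ∧ enc e y = x
        then f h.choose else 0
      map_add' := by intro f g; ext x; simp only [Pi.add_apply]; split_ifs <;> simp
      map_smul' := by intro c f; ext x; simp }
  let pg : G.E → Module.End K (Z × ℕ → K) := fun e =>
    { toFun := fun f y => if (y.1 : G.V) = G.r e then f (enc e y) else 0
      map_add' := by intro f g; ext x; simp only [Pi.add_apply]; split_ifs <;> simp
      map_smul' := by intro c f; ext x; simp }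
  have hpv : ∀ v f x, pv v f x = if (x.1 : G.V) = v then f x else 0 := fun _ _ _ => rfl
  have hpg : ∀ e f x, pg e f x = if (x.1 : G.V) = G.r e then f (enc e x) else 0 :=
    fun _ _ _ => rfl
  have hpe : ∀ e f y, (y.1 : G.V) = G.r e → pe e f (enc e y) = f y := by
    intro e f y hy
    have h : ∃ y' : Z × ℕ, (y'.1 : G.V) = G.r e ∧ enc e y' = enc e y := ⟨y, hy, rfl⟩
    change (if h : ∃ y' : Z × ℕ, (y'.1 : G.V) = G.r e ∧ enc e y' = enc e y
        then f h.choose else 0) = f y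
    rw [dif_pos h, (enc_inj e e _ y h.choose_spec.1 hy h.choose_spec.2).2]
  have hpe0 : ∀ e f x, (¬ ∃ y : Z × ℕ, (y.1 : G.V) = G.r e ∧ enc e y = x) → pe e f x = 0 := by
    intro e f x h
    exact dif_neg h
  clear_value pv pe pg enc
  suffices hex : ∃ φ : LeavittPathAlgebra K G →ₐ[K] Module.End K (Z × ℕ → K),
      ∀ v, φ (vert K G v) = pv v by
    obtain ⟨φ, hφ⟩ := hex
    refine ⟨φ, fun v => ?_⟩
    rw [hφ]
    constructor
    · intro h hv
      have := congrFun (LinearMap.congr_fun h (fun _ => 1)) (⟨v, hv⟩, 0)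
      rw [hpv] at this
      simp at this
    · intro hv
      ext f x
      rw [hpv, if_neg]
      · rfl
      · rintro rfl
        exact hv x.1.2
  refine (exists_lift (K := K) (G := G) (Module.End K (Z × ℕ → K)) pv pe pg
    ?_ ?_ ?_ ?_ ?_ ?_ ?_ ?_).imp fun φ h => h.1
  · intro v w
    refine LinearMap.ext fun f => funext fun x => ?_
    rw [Module.End.mul_apply, hpv, hpv]
    by_cases hvw : v = w
    · subst hvw
      rw [if_pos rfl, hpv]
      split_ifs <;> rfl
    · rw [if_neg hvw]
      by_cases hx : (x.1 : G.V) = v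
      · rw [if_pos hx, if_neg (fun h => hvw (hx.symm.trans h))]
        rfl
      · rw [if_neg hx]
        rfl
  · intro e
    refine LinearMap.ext fun f => funext fun x => ?_
    rw [Module.End.mul_apply, hpv]
    split_ifs with h1
    · rfl
    · rw [hpe0]
      rintro ⟨y, hy, rfl⟩
      exact h1 (enc_fst e y hy)
  · intro e
    refine LinearMap.ext fun f => funext fun x => ?_
    rw [Module.End.mul_apply]
    by_cases h : ∃ y : Z × ℕ, (y.1 : G.V) = G.r e ∧ enc e y = x
    · obtain ⟨y, hy, rfl⟩ := h
      rw [hpe e _ y hy, hpe e _ y hy, hpv, if_pos hy]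
    · rw [hpe0 _ _ _ h, hpe0 _ _ _ h]
  · intro e
    refine LinearMap.ext fun f => funext fun x => ?_
    rw [Module.End.mul_apply, hpv, hpg]
    split_ifs <;> rfl
  · intro e
    refine LinearMap.ext fun f => funext fun x => ?_
    rw [Module.End.mul_apply, hpg, hpg]
    split_ifs with h1
    · rw [hpv, if_pos (enc_fst e x h1)]
    · rfl
  · intro e e'
    refine LinearMap.ext fun f => funext fun x => ?_
    rw [Module.End.mul_apply, hpg]
    by_cases hee : e = e'
    · subst hee
      rw [if_pos rfl, hpv]
      split_ifs with h1
      · rw [hpe e _ x h1]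
      · rfl
    · rw [if_neg hee]
      split_ifs with h1
      · rw [hpe0]
        · rfl
        · rintro ⟨y, hy, hxy⟩
          exact hee (enc_inj e' e y x hy h1 hxy).1.symm
      · rfl
  · intro v hv
    refine LinearMap.ext fun f => funext fun x => ?_
    rw [hpv, LinearMap.sum_apply, Finset.sum_apply]
    split_ifs with h1
    · obtain ⟨e, y, hy, rfl⟩ := enc_surj x (h1 ▸ hv)
      have hse : G.s e = v := by rw [← enc_fst e y hy, h1]
      rw [Finset.sum_eq_single e]
      · rw [Module.End.mul_apply, hpe e _ y hy, hpg, if_pos hy]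
      · intro e' _ hne
        rw [Module.End.mul_apply, hpe0]
        rintro ⟨y', hy', h⟩
        exact hne (enc_inj e' e y' y hy' hy h).1
      · intro h
        simp [hse] at h
    · symm
      refine Finset.sum_eq_zero fun e he => ?_
      rw [Module.End.mul_apply, hpe0]
      rintro ⟨y, hy, rfl⟩
      apply h1
      rw [enc_fst e y hy]
      simpa using he
  · refine LinearMap.ext fun f => funext fun x => ?_
    rw [LinearMap.sum_apply, Finset.sum_apply]
    simp [hpv]

lemma vert_ne_zero (v : G.V) : vert K G v ≠ 0 := by
  obtain ⟨φ, hφ⟩ := exists_representation K (G := G) Set.univ (fun _ _ => trivial)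
    (fun v _ ⟨e, he⟩ => ⟨e, he, trivial⟩)
  intro h
  have := (hφ v).1 (by rw [h, map_zero])
  exact this trivial

end Representation

/-! ### Ghost paths and their linear independence -/

/-- Words in the ghost edges: `nil v` stands for the vertex `v`, and `cons e p` for the
product of `e*` with the word `p`. -/
inductive GhostWord (G : FinGraph) : Type
  | nil : G.V → GhostWord G
  | cons : G.E → GhostWord G → GhostWord G

namespace GhostWord

variable {G : FinGraph}

/-- The vertex `v` with `v p = p`. -/
def left : GhostWord G → G.V
  | nil v => v
  | cons e _ => G.r e

/-- Consecutive letters of the word are composable, so that it is a ghost path. -/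
def IsPath : GhostWord G → Prop
  | nil _ => True
  | cons e p => G.s e = p.left ∧ p.IsPath

/-- The number of ghost edges. -/
def length : GhostWord G → ℕ
  | nil _ => 0
  | cons _ p => p.length + 1

variable (K : Type) [Field K]

/-- The element of the Leavitt path algebra represented by a word. -/
noncomputable def val : GhostWord G → LeavittPathAlgebra K G
  | nil v => vert K G v
  | cons e p => ghost K G e * p.val

/-- The real path whose ghost is the given word. -/
noncomputable def real : GhostWord G → LeavittPathAlgebra K G
  | nil v => vert K G v
  | cons e p => p.real * edge K G e

lemma vert_mul_val (v : G.V) (p : GhostWord G) :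
    vert K G v * p.val K = if v = p.left then p.val K else 0 := by
  cases p with
  | nil w =>
    by_cases h : v = w
    · simp [val, left, vert_mul, h]
    · simp [val, left, vert_mul, h]
  | cons e p =>
    by_cases h : v = G.r e
    · simp [val, left, h, ← mul_assoc, vert_mul_ghost]
    · simp [val, left, h, ← mul_assoc, vert_mul_ghost_of_ne h]

open Classical in
lemma val_mul_real (p q : GhostWord G) (hp : p.IsPath) (hq : q.IsPath)
    (hl : p.length = q.length) :
    p.val K * q.real K = if p = q then vert K G p.left else 0 := by
  induction p generalizing q with
  | nil v =>
    cases q with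
    | nil w => simp [val, real, left, vert_mul]
    | cons f q => simp [length] at hl
  | cons e p ih =>
    cases q with
    | nil w => simp [length] at hl
    | cons f q =>
      have h1 := ih q hp.2 hq.2 (by simpa [length] using hl)
      have h2 : (cons e p).val K * (cons f q).real K =
          ghost K G e * (p.val K * q.real K) * edge K G f := by
        simp only [val, real, mul_assoc]
      rw [h2, h1]
      by_cases hpq : p = q
      · rw [if_pos hpq, ← hp.1, ghost_mul_vert, ghost_mul_edge]
        simp [hpq, left]
      · simp [hpq]

end GhostWord

section Degree

variable (K : Type) [Field K] (G : FinGraph)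

/-- The `ℤ`-grading of the Leavitt path algebra, encoded as an algebra morphism to Laurent
polynomials. -/
lemma exists_grading : ∃ δ : LeavittPathAlgebra K G →ₐ[K]
      AddMonoidAlgebra (LeavittPathAlgebra K G) ℤ,
    (∀ v, δ (vert K G v) = AddMonoidAlgebra.single 0 (vert K G v)) ∧
    (∀ e, δ (edge K G e) = AddMonoidAlgebra.single 1 (edge K G e)) ∧
    (∀ e, δ (ghost K G e) = AddMonoidAlgebra.single (-1) (ghost K G e)) := by
  refine exists_lift (K := K) (G := G) (AddMonoidAlgebra (LeavittPathAlgebra K G) ℤ)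
    (fun v => AddMonoidAlgebra.single 0 (vert K G v))
    (fun e => AddMonoidAlgebra.single 1 (edge K G e))
    (fun e => AddMonoidAlgebra.single (-1) (ghost K G e)) ?_ ?_ ?_ ?_ ?_ ?_ ?_ ?_
  · intro v w
    rw [AddMonoidAlgebra.single_mul_single, vert_mul]
    split_ifs <;> simp
  · intro e
    rw [AddMonoidAlgebra.single_mul_single, vert_mul_edge, zero_add]
  · intro e
    rw [AddMonoidAlgebra.single_mul_single, edge_mul_vert, add_zero]
  · intro e
    rw [AddMonoidAlgebra.single_mul_single, vert_mul_ghost, zero_add]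
  · intro e
    rw [AddMonoidAlgebra.single_mul_single, ghost_mul_vert, add_zero]
  · intro e f
    rw [AddMonoidAlgebra.single_mul_single, ghost_mul_edge]
    split_ifs <;> simp
  · intro v hv
    simp only [AddMonoidAlgebra.single_mul_single, add_neg_cancel]
    rw [vert_eq_sum v hv]
    exact map_sum (AddMonoidAlgebra.singleAddHom (R := LeavittPathAlgebra K G) (0 : ℤ)) _ _
  · rw [AddMonoidAlgebra.one_def, one_eq_sum_vert]
    exact map_sum (AddMonoidAlgebra.singleAddHom (R := LeavittPathAlgebra K G) (0 : ℤ)) _ _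

/-- The coefficient of a ghost path `q` in a combination of ghost paths is read off by taking the
homogeneous component of degree `-|q|` and multiplying it on the right by the real path of `q`. -/
lemma linearIndependent_val :
    LinearIndependent K (fun p : {p : GhostWord G // p.IsPath} => p.1.val K) := by
  classical
  obtain ⟨δ, hv, -, hg⟩ := exists_grading K G
  have hδ : ∀ p : GhostWord G,
      δ (p.val K) = AddMonoidAlgebra.single (-(p.length : ℤ)) (p.val K) := by
    intro p
    induction p with
    | nil v => simp [GhostWord.val, GhostWord.length, hv]
    | cons e p ih =>
      rw [GhostWord.val, map_mul, ih, hg, AddMonoidAlgebra.single_mul_single]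
      congr 1
      simp [GhostWord.length]
  rw [linearIndependent_iff]
  intro l hl
  ext q
  have h0 : (δ (Finsupp.linearCombination K (fun p : {p : GhostWord G // p.IsPath} => p.1.val K)
      l)).coeff (-(q.1.length : ℤ)) * q.1.real K = 0 := by
    rw [hl]; simp
  have h1 : ∀ p : {p : GhostWord G // p.IsPath},
      (δ (p.1.val K)).coeff (-(q.1.length : ℤ)) * q.1.real K =
        if p = q then vert K G q.1.left else 0 := by
    intro p
    rw [hδ]
    by_cases hlen : p.1.length = q.1.length
    · rw [hlen]
      simp only [AddMonoidAlgebra.coeff_single, Finsupp.single_eq_same]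
      rw [GhostWord.val_mul_real K _ _ p.2 q.2 hlen]
      by_cases hpq : p = q
      · simp [hpq]
      · rw [if_neg hpq, if_neg (fun h => hpq (Subtype.ext h))]
    · have hpq : p ≠ q := fun h => hlen (by rw [h])
      rw [if_neg hpq]
      simp only [AddMonoidAlgebra.coeff_single]
      rw [Finsupp.single_eq_of_ne, zero_mul]
      omega
  have h2 : ∀ l : {p : GhostWord G // p.IsPath} →₀ K,
      (δ (Finsupp.linearCombination K (fun p : {p : GhostWord G // p.IsPath} => p.1.val K)
        l)).coeff (-(q.1.length : ℤ)) * q.1.real K = l q • vert K G q.1.left := by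
    intro l
    induction l using Finsupp.induction_linear with
    | zero => simp
    | add f g hf hg =>
      rw [map_add, map_add, AddMonoidAlgebra.coeff_add, Finsupp.add_apply, add_mul, hf, hg,
        Finsupp.add_apply, add_smul]
    | single p c =>
      rw [Finsupp.linearCombination_single, map_smul, AddMonoidAlgebra.coeff_smul,
        Finsupp.smul_apply, smul_mul_assoc, h1, Finsupp.single_apply]
      split_ifs <;> simp
  rw [h2] at h0
  exact (smul_eq_zero.1 h0).resolve_right (vert_ne_zero K _)

end Degree

/-! ### The ghost path algebra inside the Leavitt path algebra -/

section GhostAlgebra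

variable (K : Type) [Field K] (G : FinGraph)

/-- The subspace of `L_K(G)` spanned by the ghost paths. -/
noncomputable def ghostAlg : Submodule K (LeavittPathAlgebra K G) :=
  Submodule.span K {x | ∃ p : GhostWord G, p.IsPath ∧ p.val K = x}

/-- The subspace of `L_K(G)` spanned by the ghost paths of length less than `m`. -/
noncomputable def ghostLT (m : ℕ) : Submodule K (LeavittPathAlgebra K G) :=
  Submodule.span K {x | ∃ p : GhostWord G, p.IsPath ∧ p.length < m ∧ p.val K = x}

lemma exists_ghostLift {M : Type} [AddCommGroup M] [Module K M] (g : GhostWord G → M) :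
    ∃ φ : LeavittPathAlgebra K G →ₗ[K] M, ∀ p : GhostWord G, p.IsPath → φ (p.val K) = g p := by
  obtain ⟨ψ, hψ⟩ := LinearMap.exists_leftInverse_of_injective
    (Finsupp.linearCombination K (fun p : {p : GhostWord G // p.IsPath} => p.1.val K))
    (LinearMap.ker_eq_bot.2 (linearIndependent_val K G))
  refine ⟨(Finsupp.linearCombination K (fun p : {p : GhostWord G // p.IsPath} => g p.1)) ∘ₗ ψ,
    fun p hp => ?_⟩
  have h := LinearMap.congr_fun hψ (Finsupp.single ⟨p, hp⟩ 1)
  rw [LinearMap.comp_apply, Finsupp.linearCombination_single, one_smul] at h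
  rw [LinearMap.comp_apply, h]
  simp

/-- The linear map with prescribed values on the ghost paths; outside the span of the ghost paths
its values are irrelevant. -/
noncomputable def ghostLift {M : Type} [AddCommGroup M] [Module K M] (g : GhostWord G → M) :
    LeavittPathAlgebra K G →ₗ[K] M :=
  (exists_ghostLift K G g).choose

lemma ghostLift_val {M : Type} [AddCommGroup M] [Module K M] (g : GhostWord G → M)
    (p : GhostWord G) (hp : p.IsPath) : ghostLift K G g (p.val K) = g p :=
  (exists_ghostLift K G g).choose_spec p hp

/-- The operator that removes a leading letter `e*`, and kills the ghost paths that do not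
start with `e*`. -/
noncomputable def strip (e : G.E) : LeavittPathAlgebra K G →ₗ[K] LeavittPathAlgebra K G :=
  ghostLift K G fun p => match p with
    | GhostWord.nil _ => 0
    | GhostWord.cons f q => if f = e then q.val K else 0

/-- The coefficient of the vertex `v` in a combination of ghost paths. -/
noncomputable def vertCoeff (v : G.V) : LeavittPathAlgebra K G →ₗ[K] K :=
  ghostLift K G fun p => match p with
    | GhostWord.nil w => if w = v then 1 else 0
    | GhostWord.cons _ _ => 0

variable {K G}

lemma strip_vert (e : G.E) (v : G.V) : strip K G e (vert K G v) = 0 :=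
  ghostLift_val K G _ (GhostWord.nil v) trivial

lemma strip_cons (e f : G.E) (p : GhostWord G) (hp : (GhostWord.cons f p).IsPath) :
    strip K G e ((GhostWord.cons f p).val K) = if f = e then p.val K else 0 :=
  ghostLift_val K G _ (GhostWord.cons f p) hp

lemma vertCoeff_vert (v w : G.V) : vertCoeff K G v (vert K G w) = if w = v then 1 else 0 :=
  ghostLift_val K G _ (GhostWord.nil w) trivial

lemma vertCoeff_cons (v : G.V) (f : G.E) (p : GhostWord G) (hp : (GhostWord.cons f p).IsPath) :
    vertCoeff K G v ((GhostWord.cons f p).val K) = 0 :=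
  ghostLift_val K G _ (GhostWord.cons f p) hp

lemma val_mem_ghostAlg {p : GhostWord G} (hp : p.IsPath) : p.val K ∈ ghostAlg K G :=
  Submodule.subset_span ⟨p, hp, rfl⟩

lemma val_mem_ghostLT {p : GhostWord G} (hp : p.IsPath) {m : ℕ} (hm : p.length < m) :
    p.val K ∈ ghostLT K G m :=
  Submodule.subset_span ⟨p, hp, hm, rfl⟩

lemma vert_mem_ghostAlg (v : G.V) : vert K G v ∈ ghostAlg K G :=
  val_mem_ghostAlg (p := GhostWord.nil v) trivial

lemma one_mem_ghostAlg : (1 : LeavittPathAlgebra K G) ∈ ghostAlg K G := by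
  rw [one_eq_sum_vert]
  exact Submodule.sum_mem _ fun v _ => vert_mem_ghostAlg v

lemma ghostLT_mono {m m' : ℕ} (h : m ≤ m') : ghostLT K G m ≤ ghostLT K G m' :=
  Submodule.span_mono fun _ ⟨p, hp, hl, hx⟩ => ⟨p, hp, hl.trans_le h, hx⟩

lemma ghostLT_le_ghostAlg (m : ℕ) : ghostLT K G m ≤ ghostAlg K G :=
  Submodule.span_mono fun _ ⟨p, hp, _, hx⟩ => ⟨p, hp, hx⟩

lemma ghostLT_zero : ghostLT K G 0 = ⊥ := by
  rw [ghostLT, Submodule.span_eq_bot]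
  rintro x ⟨p, -, hl, -⟩
  exact absurd hl (Nat.not_lt_zero _)

lemma exists_mem_ghostLT {x : LeavittPathAlgebra K G} (hx : x ∈ ghostAlg K G) :
    ∃ m, x ∈ ghostLT K G m := by
  induction hx using Submodule.span_induction with
  | mem x h =>
    obtain ⟨p, hp, rfl⟩ := h
    exact ⟨p.length + 1, val_mem_ghostLT hp (Nat.lt_succ_self _)⟩
  | zero => exact ⟨0, Submodule.zero_mem _⟩
  | add x y _ _ hx hy =>
    obtain ⟨m, hm⟩ := hx
    obtain ⟨m', hm'⟩ := hy
    exact ⟨max m m', Submodule.add_mem _ (ghostLT_mono (le_max_left _ _) hm)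
      (ghostLT_mono (le_max_right _ _) hm')⟩
  | smul c x _ hx =>
    obtain ⟨m, hm⟩ := hx
    exact ⟨m, Submodule.smul_mem _ c hm⟩

lemma vert_mul_mem_ghostLT (v : G.V) {m : ℕ} {x : LeavittPathAlgebra K G}
    (hx : x ∈ ghostLT K G m) : vert K G v * x ∈ ghostLT K G m := by
  induction hx using Submodule.span_induction with
  | mem x h =>
    obtain ⟨p, hp, hl, rfl⟩ := h
    rw [GhostWord.vert_mul_val]
    split_ifs
    · exact val_mem_ghostLT hp hl
    · exact Submodule.zero_mem _
  | zero => simp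
  | add x y _ _ hx hy => rw [mul_add]; exact Submodule.add_mem _ hx hy
  | smul c x _ hx => rw [mul_smul_comm]; exact Submodule.smul_mem _ c hx

lemma vert_mul_mem_ghostAlg (v : G.V) {x : LeavittPathAlgebra K G}
    (hx : x ∈ ghostAlg K G) : vert K G v * x ∈ ghostAlg K G := by
  obtain ⟨m, hm⟩ := exists_mem_ghostLT hx
  exact ghostLT_le_ghostAlg m (vert_mul_mem_ghostLT v hm)

lemma ghost_mul_mem_ghostAlg (e : G.E) {x : LeavittPathAlgebra K G}
    (hx : x ∈ ghostAlg K G) : ghost K G e * x ∈ ghostAlg K G := by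
  induction hx using Submodule.span_induction with
  | mem x h =>
    obtain ⟨p, hp, rfl⟩ := h
    rw [← ghost_mul_vert, mul_assoc, GhostWord.vert_mul_val]
    split_ifs with h
    · exact val_mem_ghostAlg (p := GhostWord.cons e p) ⟨h, hp⟩
    · simp
  | zero => simp
  | add x y _ _ hx hy => rw [mul_add]; exact Submodule.add_mem _ hx hy
  | smul c x _ hx => rw [mul_smul_comm]; exact Submodule.smul_mem _ c hx

lemma val_mul_mem_ghostAlg (p : GhostWord G) {x : LeavittPathAlgebra K G}
    (hx : x ∈ ghostAlg K G) : p.val K * x ∈ ghostAlg K G := by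
  induction p with
  | nil v => exact vert_mul_mem_ghostAlg v hx
  | cons e p ih => rw [GhostWord.val, mul_assoc]; exact ghost_mul_mem_ghostAlg e ih

lemma strip_mem_ghostLT (e : G.E) {m : ℕ} {x : LeavittPathAlgebra K G}
    (hx : x ∈ ghostLT K G (m + 1)) : strip K G e x ∈ ghostLT K G m := by
  induction hx using Submodule.span_induction with
  | mem x h =>
    obtain ⟨p, hp, hl, rfl⟩ := h
    cases p with
    | nil v => rw [GhostWord.val, strip_vert]; exact Submodule.zero_mem _
    | cons f p =>
      rw [strip_cons e f p hp]
      split_ifs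
      · exact val_mem_ghostLT hp.2 (by simpa [GhostWord.length] using hl)
      · exact Submodule.zero_mem _
  | zero => simp
  | add x y _ _ hx hy => rw [map_add]; exact Submodule.add_mem _ hx hy
  | smul c x _ hx => rw [map_smul]; exact Submodule.smul_mem _ c hx

lemma strip_mem_ghostLT' (e : G.E) {m : ℕ} {x : LeavittPathAlgebra K G}
    (hx : x ∈ ghostLT K G m) : strip K G e x ∈ ghostLT K G m :=
  strip_mem_ghostLT e (ghostLT_mono (Nat.le_succ m) hx)

lemma strip_mem_ghostAlg (e : G.E) {x : LeavittPathAlgebra K G}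
    (hx : x ∈ ghostAlg K G) : strip K G e x ∈ ghostAlg K G := by
  obtain ⟨m, hm⟩ := exists_mem_ghostLT hx
  exact ghostLT_le_ghostAlg m (strip_mem_ghostLT' e hm)

lemma strip_ghost_mul (e f : G.E) {x : LeavittPathAlgebra K G} (hx : x ∈ ghostAlg K G) :
    strip K G e (ghost K G f * x) = if f = e then vert K G (G.s e) * x else 0 := by
  induction hx using Submodule.span_induction with
  | mem x h =>
    obtain ⟨p, hp, rfl⟩ := h
    by_cases h : G.s f = p.left
    · have := strip_cons (K := K) e f p ⟨h, hp⟩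
      rw [GhostWord.val] at this
      rw [this]
      split_ifs with hfe
      · subst hfe
        rw [GhostWord.vert_mul_val, if_pos h]
      · rfl
    · rw [← ghost_mul_vert, mul_assoc, GhostWord.vert_mul_val, if_neg h, mul_zero, map_zero]
      split_ifs with hfe
      · subst hfe
        rw [GhostWord.vert_mul_val, if_neg h]
      · rfl
  | zero => simp
  | add x y _ _ hx hy =>
    rw [mul_add, map_add, hx, hy]
    split_ifs <;> simp [mul_add]
  | smul c x _ hx =>
    rw [mul_smul_comm, map_smul, hx]
    split_ifs <;> simp

lemma strip_vert_mul (e : G.E) (v : G.V) {x : LeavittPathAlgebra K G} (hx : x ∈ ghostAlg K G) :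
    strip K G e (vert K G v * x) = if v = G.r e then strip K G e x else 0 := by
  induction hx using Submodule.span_induction with
  | mem x h =>
    obtain ⟨p, hp, rfl⟩ := h
    cases p with
    | nil w =>
      rw [GhostWord.vert_mul_val, GhostWord.val]
      split_ifs <;> simp [strip_vert]
    | cons f p =>
      rw [GhostWord.val, ← mul_assoc]
      by_cases hv : v = G.r f
      · rw [hv, vert_mul_ghost]
        have h := strip_cons (K := K) e f p hp
        rw [GhostWord.val] at h
        rw [h]
        by_cases hfe : f = e <;> simp [hfe]
      · rw [vert_mul_ghost_of_ne hv, zero_mul, map_zero]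
        have h := strip_cons (K := K) e f p hp
        rw [GhostWord.val] at h
        rw [h]
        by_cases hfe : f = e
        · rw [if_neg (hfe ▸ hv)]
        · simp [hfe]
  | zero => simp
  | add x y _ _ hx hy =>
    rw [mul_add, map_add, hx, hy]
    split_ifs <;> simp
  | smul c x _ hx =>
    rw [mul_smul_comm, map_smul, hx]
    split_ifs <;> simp

/-- The twisted Leibniz rule for the removal of a leading letter. -/
lemma strip_mul (e : G.E) {x y : LeavittPathAlgebra K G} (hx : x ∈ ghostAlg K G)
    (hy : y ∈ ghostAlg K G) :
    strip K G e (x * y) = strip K G e x * y + vertCoeff K G (G.r e) x • strip K G e y := by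
  induction hx using Submodule.span_induction with
  | mem x h =>
    obtain ⟨p, hp, rfl⟩ := h
    cases p with
    | nil v =>
      rw [GhostWord.val, strip_vert_mul e v hy, strip_vert, vertCoeff_vert]
      split_ifs <;> simp
    | cons f p =>
      rw [strip_cons e f p hp, vertCoeff_cons _ f p hp, GhostWord.val, mul_assoc,
        strip_ghost_mul e f (val_mul_mem_ghostAlg p hy)]
      split_ifs with hfe
      · subst hfe
        rw [← mul_assoc, GhostWord.vert_mul_val, if_pos hp.1]
        simp
      · simp
  | zero => simp
  | add x x' _ _ hx hx' =>
    rw [add_mul, map_add, hx, hx', map_add, map_add, add_mul, add_smul]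
    abel
  | smul c x _ hx =>
    rw [smul_mul_assoc, map_smul, hx, map_smul, map_smul, smul_add, smul_mul_assoc,
      smul_eq_mul, mul_smul]

lemma eq_vert_add_strip {x : LeavittPathAlgebra K G} (hx : x ∈ ghostAlg K G) :
    x = ∑ v, vertCoeff K G v x • vert K G v + ∑ e, ghost K G e * strip K G e x := by
  induction hx using Submodule.span_induction with
  | mem x h =>
    obtain ⟨p, hp, rfl⟩ := h
    cases p with
    | nil v => simp [GhostWord.val, strip_vert, vertCoeff_vert]
    | cons f p =>
      simp only [strip_cons _ f p hp, vertCoeff_cons _ f p hp]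
      simp [GhostWord.val]
  | zero => simp
  | add x y _ _ hx hy =>
    simp only [map_add, add_smul, mul_add, Finset.sum_add_distrib]
    nth_rewrite 1 [hx, hy]
    abel
  | smul c x _ hx =>
    simp only [map_smul, smul_eq_mul, mul_smul, mul_smul_comm, ← Finset.smul_sum, ← smul_add]
    rw [← hx]

end GhostAlgebra

/-! ### Clearing real edges by left multiplication with ghost paths -/

section Clearing

variable (K : Type) [Field K] (G : FinGraph)

/-- The elements that are carried into the span of the ghost paths by left multiplication with
all ghost paths of length `k`, and with all shorter ones whose left end is a sink. -/
noncomputable def clearable : ℕ → Submodule K (LeavittPathAlgebra K G)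
  | 0 => ghostAlg K G
  | k + 1 => (⨅ e : G.E, (clearable k).comap (LinearMap.mulLeft K (ghost K G e))) ⊓
      ⨅ v : G.V, ⨅ _ : ¬ G.IsRegular v, (ghostAlg K G).comap (LinearMap.mulLeft K (vert K G v))

variable {K G}

lemma mem_clearable_succ {k : ℕ} {x : LeavittPathAlgebra K G} :
    x ∈ clearable K G (k + 1) ↔ (∀ e, ghost K G e * x ∈ clearable K G k) ∧
      ∀ v, ¬ G.IsRegular v → vert K G v * x ∈ ghostAlg K G := by
  simp [clearable, Submodule.mem_iInf]

lemma clearable_le_succ (k : ℕ) : clearable K G k ≤ clearable K G (k + 1) := by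
  induction k with
  | zero =>
    intro x hx
    exact mem_clearable_succ.2 ⟨fun e => ghost_mul_mem_ghostAlg e hx,
      fun v _ => vert_mul_mem_ghostAlg v hx⟩
  | succ k ih =>
    intro x hx
    rw [mem_clearable_succ] at hx
    exact mem_clearable_succ.2 ⟨fun e => ih (hx.1 e), hx.2⟩

lemma clearable_mono {k l : ℕ} (h : k ≤ l) : clearable K G k ≤ clearable K G l :=
  monotone_nat_of_le_succ clearable_le_succ h

lemma vert_mul_mem_clearable (v : G.V) {k : ℕ} {x : LeavittPathAlgebra K G}
    (hx : x ∈ clearable K G k) : vert K G v * x ∈ clearable K G k := by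
  cases k with
  | zero => exact vert_mul_mem_ghostAlg v hx
  | succ k =>
    rw [mem_clearable_succ] at hx ⊢
    refine ⟨fun e => ?_, fun w hw => ?_⟩
    · rw [← mul_assoc]
      by_cases h : G.s e = v
      · rw [← h, ghost_mul_vert]
        exact hx.1 e
      · rw [ghost_mul_vert_of_ne h, zero_mul]
        exact Submodule.zero_mem _
    · rw [← mul_assoc, vert_mul]
      split_ifs
      · exact hx.2 w hw
      · rw [zero_mul]
        exact Submodule.zero_mem _

lemma edge_mul_mem_clearable (f : G.E) {k : ℕ} {x : LeavittPathAlgebra K G}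
    (hx : x ∈ clearable K G k) : edge K G f * x ∈ clearable K G (k + 1) := by
  rw [mem_clearable_succ]
  refine ⟨fun e => ?_, fun w hw => ?_⟩
  · rw [← mul_assoc, ghost_mul_edge]
    split_ifs
    · exact vert_mul_mem_clearable _ hx
    · rw [zero_mul]
      exact Submodule.zero_mem _
  · rw [← mul_assoc, vert_mul_edge_of_ne (fun h => hw ⟨f, h.symm⟩), zero_mul]
    exact Submodule.zero_mem _

lemma exists_mem_clearable_mul (x : LeavittPathAlgebra K G) :
    ∀ y : LeavittPathAlgebra K G, (∃ k, y ∈ clearable K G k) →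
      ∃ k, x * y ∈ clearable K G k := by
  obtain ⟨x, rfl⟩ := RingQuot.mkAlgHom_surjective K (LeavittRel K G) x
  induction x using FreeAlgebra.induction with
  | grade0 r =>
    rintro y ⟨k, hk⟩
    refine ⟨k, ?_⟩
    rw [AlgHom.commutes, ← Algebra.smul_def]
    exact Submodule.smul_mem _ r hk
  | grade1 g =>
    rintro y ⟨k, hk⟩
    cases g with
    | vert v => exact ⟨k, vert_mul_mem_clearable v hk⟩
    | edge e => exact ⟨k + 1, edge_mul_mem_clearable e hk⟩
    | ghost e => exact ⟨k, (mem_clearable_succ.1 (clearable_le_succ k hk)).1 e⟩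
  | mul a b ha hb =>
    intro y hy
    rw [map_mul, mul_assoc]
    exact ha _ (hb _ hy)
  | add a b ha hb =>
    intro y hy
    obtain ⟨k, hk⟩ := ha y hy
    obtain ⟨l, hl⟩ := hb y hy
    refine ⟨max k l, ?_⟩
    rw [map_add, add_mul]
    exact Submodule.add_mem _ (clearable_mono (le_max_left _ _) hk)
      (clearable_mono (le_max_right _ _) hl)

lemma exists_mem_clearable (x : LeavittPathAlgebra K G) : ∃ k, x ∈ clearable K G k := by
  simpa using exists_mem_clearable_mul x 1 ⟨0, one_mem_ghostAlg⟩

lemma exists_forall_mem_clearable {ι : Type} [Fintype ι] (x : ι → LeavittPathAlgebra K G) :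
    ∃ k, ∀ j, x j ∈ clearable K G k := by
  choose k hk using fun j => exists_mem_clearable (x j)
  exact ⟨Finset.univ.sup k, fun j => clearable_mono (Finset.le_sup (Finset.mem_univ j)) (hk j)⟩

open Classical in
lemma eq_sinks_add_edges {M : Type} [AddCommGroup M] [Module (LeavittPathAlgebra K G) M] (x : M) :
    x = (∑ v : G.V, if G.IsRegular v then 0 else vert K G v • x) +
      ∑ e : G.E, edge K G e • ghost K G e • x := by
  conv_lhs => rw [← one_smul (LeavittPathAlgebra K G) x, one_eq_sinks_add_edges, add_smul,
    Finset.sum_smul, Finset.sum_smul]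
  congr 1
  · refine Finset.sum_congr rfl fun v _ => ?_
    split_ifs <;> simp
  · exact Finset.sum_congr rfl fun e _ => mul_smul _ _ _

/-- A nonzero tuple can be multiplied into a nonzero tuple of combinations of ghost paths. -/
lemma exists_clearing {ι : Type} [Fintype ι] (a : ι → LeavittPathAlgebra K G) (ha : a ≠ 0) :
    ∃ u : LeavittPathAlgebra K G, (∀ j, u * a j ∈ ghostAlg K G) ∧ ∃ j, u * a j ≠ 0 := by
  obtain ⟨k, hk⟩ := exists_forall_mem_clearable a
  induction k generalizing a with
  | zero =>
    obtain ⟨j, hj⟩ := Function.ne_iff.1 ha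
    exact ⟨1, fun j => by rw [one_mul]; exact hk j, j, by rwa [one_mul]⟩
  | succ k ih =>
    by_cases h1 : ∃ e : G.E, ghost K G e • a ≠ 0
    · obtain ⟨e, he⟩ := h1
      obtain ⟨u, hu, j, hj⟩ := ih (ghost K G e • a) he
        fun j => (mem_clearable_succ.1 (hk j)).1 e
      refine ⟨u * ghost K G e, fun j => ?_, j, ?_⟩
      · rw [mul_assoc]; exact hu j
      · rw [mul_assoc]; exact hj
    · by_cases h2 : ∃ v : G.V, ¬ G.IsRegular v ∧ vert K G v • a ≠ 0
      · obtain ⟨v, hv, hva⟩ := h2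
        obtain ⟨j, hj⟩ := Function.ne_iff.1 hva
        exact ⟨vert K G v, fun j => (mem_clearable_succ.1 (hk j)).2 v hv, j, hj⟩
      · push Not at h1 h2
        refine (ha ?_).elim
        rw [eq_sinks_add_edges (K := K) (G := G) a]
        rw [Finset.sum_eq_zero, Finset.sum_eq_zero, add_zero]
        · intro e _
          rw [h1 e, smul_zero]
        · intro v _
          split_ifs with hv
          · rfl
          · exact h2 v hv

/-- A submodule of a free module is generated by its homogeneous (with respect to vertices)
elements all of whose coordinates are combinations of ghost paths. -/
lemma span_ghost_elements {n : ℕ}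
    (M : Submodule (LeavittPathAlgebra K G) (Fin n → LeavittPathAlgebra K G)) :
    Submodule.span (LeavittPathAlgebra K G)
      {x | x ∈ M ∧ (∀ i, x i ∈ ghostAlg K G) ∧ ∃ v, vert K G v • x = x} = M := by
  refine le_antisymm (Submodule.span_le.2 fun x hx => hx.1) fun x hx => ?_
  have hsub : ∀ x ∈ M, (∀ i, x i ∈ ghostAlg K G) → x ∈ Submodule.span (LeavittPathAlgebra K G)
      {x | x ∈ M ∧ (∀ i, x i ∈ ghostAlg K G) ∧ ∃ v, vert K G v • x = x} := by
    intro x hx hxi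
    rw [← one_smul (LeavittPathAlgebra K G) x, one_eq_sum_vert, Finset.sum_smul]
    refine Submodule.sum_mem _ fun v _ => Submodule.subset_span ⟨M.smul_mem _ hx, fun i => ?_, v, ?_⟩
    · exact vert_mul_mem_ghostAlg v (hxi i)
    · rw [← mul_smul, vert_mul_self]
  obtain ⟨k, hk⟩ := exists_forall_mem_clearable x
  induction k generalizing x with
  | zero => exact hsub x hx hk
  | succ k ih =>
    rw [eq_sinks_add_edges (K := K) (G := G) x]
    refine Submodule.add_mem _ (Submodule.sum_mem _ fun v _ => ?_)
      (Submodule.sum_mem _ fun e _ => Submodule.smul_mem _ _ ?_)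
    · split_ifs with hv
      · exact Submodule.zero_mem _
      · exact hsub _ (M.smul_mem _ hx) fun i => (mem_clearable_succ.1 (hk i)).2 v hv
    · exact ih _ (M.smul_mem _ hx) fun i => (mem_clearable_succ.1 (hk i)).1 e

end Clearing

/-! ### The weak algorithm and finitely generated submodules of free modules -/

section WeakAlgorithm

variable {K : Type} [Field K] {G : FinGraph}

/-- The weak algorithm for the ghost path algebra: a relation of low degree between the `b j`, with
coefficients in the ghost path algebra and involving `b j₀`, can be turned by
removing leading letters into one where the coefficient of `b j₀` is a vertex. -/
lemma weak_algorithm {ι : Type} [Fintype ι] {n : ℕ} (b : ι → Fin n → LeavittPathAlgebra K G)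
    (m : ℕ) (j₀ : ι) (v : G.V) (k : ℕ) (a : ι → LeavittPathAlgebra K G)
    (ha : ∀ j, a j ∈ ghostAlg K G) (hk : a j₀ ∈ ghostLT K G k)
    (hv : a j₀ * vert K G v = a j₀) (h0 : a j₀ ≠ 0)
    (hb : ∀ j, a j ≠ 0 → ∀ i, b j i ∈ ghostLT K G (m + 1))
    (hab : ∀ i, ∑ j, a j * b j i ∈ ghostLT K G m) :
    ∃ a' : ι → LeavittPathAlgebra K G, a' j₀ = vert K G v ∧
      ∀ i, ∑ j, a' j * b j i ∈ ghostLT K G m := by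
  induction k generalizing a with
  | zero =>
    rw [ghostLT_zero, Submodule.mem_bot] at hk
    exact (h0 hk).elim
  | succ k ih =>
    by_cases hs : ∃ e, strip K G e (a j₀) ≠ 0
    · obtain ⟨e, he⟩ := hs
      refine ih (fun j => strip K G e (a j)) (fun j => strip_mem_ghostAlg e (ha j))
        (strip_mem_ghostLT e hk) ?_ he (fun j hj => hb j fun h => hj (by simp [h])) fun i => ?_
      · have h := strip_mul e (ha j₀) (vert_mem_ghostAlg v)
        rw [hv, strip_vert, smul_zero, add_zero] at h
        exact h.symm
      · have h : ∑ j, strip K G e (a j) * b j i = strip K G e (∑ j, a j * b j i) -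
            ∑ j, vertCoeff K G (G.r e) (a j) • strip K G e (b j i) := by
          rw [map_sum, ← Finset.sum_sub_distrib]
          refine Finset.sum_congr rfl fun j _ => ?_
          by_cases hj : a j = 0
          · simp [hj]
          · rw [strip_mul e (ha j) (ghostLT_le_ghostAlg _ (hb j hj i)), add_sub_cancel_right]
        rw [h]
        refine Submodule.sub_mem _ (strip_mem_ghostLT' e (hab i))
          (Submodule.sum_mem _ fun j _ => ?_)
        by_cases hj : a j = 0
        · simp [hj]
        · exact Submodule.smul_mem _ _ (strip_mem_ghostLT e (hb j hj i))
    · push Not at hs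
      have h1 : a j₀ = vertCoeff K G v (a j₀) • vert K G v := by
        have h2 := eq_vert_add_strip (ha j₀)
        simp only [hs, mul_zero, Finset.sum_const_zero, add_zero] at h2
        rw [← hv]
        conv_lhs => rw [h2]
        rw [Finset.sum_mul, Finset.sum_eq_single v]
        · rw [smul_mul_assoc, vert_mul_self, hv]
        · intro w _ hw
          rw [smul_mul_assoc, vert_mul, if_neg hw, smul_zero]
        · intro h
          exact (h (Finset.mem_univ v)).elim
      have hc : vertCoeff K G v (a j₀) ≠ 0 := by
        intro h
        rw [h, zero_smul] at h1
        exact h0 h1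
      refine ⟨fun j => (vertCoeff K G v (a j₀))⁻¹ • a j, ?_, fun i => ?_⟩
      · change (vertCoeff K G v (a j₀))⁻¹ • a j₀ = vert K G v
        conv_lhs => rw [h1]
        rw [map_smul, vertCoeff_vert, if_pos rfl, smul_eq_mul, mul_one, inv_smul_smul₀ hc]
      · simp only [smul_mul_assoc, ← Finset.smul_sum]
        exact Submodule.smul_mem _ _ (hab i)

/-- The only relations `∑ a j • b j = 0` with `a j ∈ L (v j)` are those supported on
the vanishing `b j`. -/
def Independent {ι : Type} [Fintype ι] {n : ℕ} (v : ι → G.V)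
    (b : ι → Fin n → LeavittPathAlgebra K G) : Prop :=
  ∀ a : ι → LeavittPathAlgebra K G, (∀ j, a j * vert K G (v j) = a j) →
    (∀ j, b j = 0 → a j = 0) → ∑ j, a j • b j = 0 → a = 0

/-- Families of ghost elements can be made independent without changing their span, by
induction on the sum of the degrees. -/
lemma exists_independent {ι : Type} [Fintype ι] [DecidableEq ι] {n : ℕ} (v : ι → G.V) (N : ℕ)
    (b : ι → Fin n → LeavittPathAlgebra K G) (s : ι → ℕ) (hN : ∑ j, s j = N)
    (hbs : ∀ j i, b j i ∈ ghostLT K G (s j)) (hvb : ∀ j, vert K G (v j) • b j = b j) :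
    ∃ b' : ι → Fin n → LeavittPathAlgebra K G, (∀ j, vert K G (v j) • b' j = b' j) ∧
      Submodule.span (LeavittPathAlgebra K G) (Set.range b') =
        Submodule.span (LeavittPathAlgebra K G) (Set.range b) ∧ Independent v b' := by
  classical
  induction N using Nat.strong_induction_on generalizing b s with
  | _ N ih =>
    by_cases hind : Independent v b
    · exact ⟨b, hvb, rfl, hind⟩
    rw [Independent] at hind
    push Not at hind
    obtain ⟨a, hav, hab, hsum, hane⟩ := hind
    obtain ⟨u, hu, j₁, hj₁⟩ := exists_clearing a hane
    -- among the terms of the cleared relation, `b j₀` has maximal degree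
    obtain ⟨j₀, hj₀, hmax⟩ := Finset.exists_max_image
      (Finset.univ.filter fun j => u * a j ≠ 0) s ⟨j₁, by simpa using hj₁⟩
    replace hj₀ : u * a j₀ ≠ 0 := by simpa using hj₀
    have hs₀ : s j₀ ≠ 0 := by
      intro hs
      apply hj₀
      rw [hab j₀, mul_zero]
      ext i
      have := hbs j₀ i
      rwa [hs, ghostLT_zero, Submodule.mem_bot] at this
    obtain ⟨m, hm⟩ := Nat.exists_eq_succ_of_ne_zero hs₀
    obtain ⟨k, hk⟩ := exists_mem_ghostLT (hu j₀)
    obtain ⟨a', ha'₀, ha'⟩ := weak_algorithm b m j₀ (v j₀) k (fun j => u * a j) hu hk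
      (by rw [mul_assoc, hav]) hj₀
      (fun j hj i => by
        refine ghostLT_mono ?_ (hbs j i)
        rw [← Nat.succ_eq_add_one, ← hm]
        exact hmax j (by simpa using hj))
      (fun i => by
        have h : ∑ j, u * a j * b j i = 0 := by
          have := congrFun hsum i
          simp only [Finset.sum_apply, Pi.smul_apply, smul_eq_mul, Pi.zero_apply] at this
          simp only [mul_assoc]
          rw [← Finset.mul_sum, this, mul_zero]
        rw [h]
        exact Submodule.zero_mem _)
    let c : Fin n → LeavittPathAlgebra K G := vert K G (v j₀) • ∑ j, a' j • b j
    have hc : c = b j₀ + ∑ j ∈ Finset.univ.erase j₀, vert K G (v j₀) • a' j • b j := by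
      simp only [c]
      rw [Finset.smul_sum, ← Finset.add_sum_erase _ _ (Finset.mem_univ j₀), ha'₀, hvb, hvb]
    let b₁ := Function.update b j₀ c
    have hb₁ : ∀ j, j ≠ j₀ → b₁ j = b j := fun j hj => Function.update_of_ne hj _ _
    have hb₁₀ : b₁ j₀ = c := Function.update_self _ _ _
    have hspan : Submodule.span (LeavittPathAlgebra K G) (Set.range b₁) =
        Submodule.span (LeavittPathAlgebra K G) (Set.range b) := by
      refine le_antisymm (Submodule.span_le.2 ?_) (Submodule.span_le.2 ?_)
      · rintro _ ⟨j, rfl⟩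
        by_cases hj : j = j₀
        · rw [hj, hb₁₀]
          exact Submodule.smul_mem _ _ (Submodule.sum_mem _ fun j _ =>
            Submodule.smul_mem _ _ (Submodule.subset_span ⟨j, rfl⟩))
        · rw [hb₁ j hj]
          exact Submodule.subset_span ⟨j, rfl⟩
      · rintro _ ⟨j, rfl⟩
        by_cases hj : j = j₀
        · rw [hj, eq_sub_of_add_eq hc.symm, ← hb₁₀]
          refine Submodule.sub_mem _ (Submodule.subset_span ⟨j₀, rfl⟩)
            (Submodule.sum_mem _ fun j hj => Submodule.smul_mem _ _ (Submodule.smul_mem _ _ ?_))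
          rw [← hb₁ j (Finset.ne_of_mem_erase hj)]
          exact Submodule.subset_span ⟨j, rfl⟩
        · rw [← hb₁ j hj]
          exact Submodule.subset_span ⟨j, rfl⟩
    have hlt : ∑ j, Function.update s j₀ m j < N := by
      rw [← hN]
      refine Finset.sum_lt_sum (fun j _ => ?_) ⟨j₀, Finset.mem_univ _, ?_⟩
      · by_cases hj : j = j₀
        · subst hj
          rw [Function.update_self, hm]
          exact Nat.le_succ m
        · rw [Function.update_of_ne hj]
      · rw [Function.update_self, hm]
        exact Nat.lt_succ_self m
    have hA : ∀ j i, b₁ j i ∈ ghostLT K G (Function.update s j₀ m j) := by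
      intro j i
      by_cases hj : j = j₀
      · subst hj
        rw [Function.update_self, hb₁₀]
        refine vert_mul_mem_ghostLT _ ?_
        have := ha' i
        simpa [Finset.sum_apply] using this
      · rw [Function.update_of_ne hj, hb₁ j hj]
        exact hbs j i
    have hB : ∀ j, vert K G (v j) • b₁ j = b₁ j := by
      intro j
      by_cases hj : j = j₀
      · subst hj
        rw [hb₁₀, ← mul_smul, vert_mul_self]
      · rw [hb₁ j hj, hvb]
    obtain ⟨b', h1, h2, h3⟩ := ih _ hlt b₁ (Function.update s j₀ m) rfl hA hB
    exact ⟨b', h1, h2.trans hspan, h3⟩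

lemma mem_span_vert {v : G.V} {x : LeavittPathAlgebra K G} :
    x ∈ Submodule.span (LeavittPathAlgebra K G) {vert K G v} ↔ x * vert K G v = x := by
  rw [Submodule.mem_span_singleton]
  constructor
  · rintro ⟨a, rfl⟩
    rw [smul_eq_mul, mul_assoc, vert_mul_self]
  · intro h
    exact ⟨x, h⟩

/-- Every finitely generated submodule of a free module of finite rank is a finite direct sum of
modules `L v`. -/
lemma fg_submodule_decomposition {n : ℕ}
    (M : Submodule (LeavittPathAlgebra K G) (Fin n → LeavittPathAlgebra K G)) (hM : M.FG) :
    ∃ (ι : Type) (_ : Fintype ι) (v : ι → G.V), Nonempty (M ≃ₗ[LeavittPathAlgebra K G]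
      ((j : ι) → ↥(Submodule.span (LeavittPathAlgebra K G) {vert K G (v j)}))) := by
  classical
  have h := span_ghost_elements M
  rw [← h, Submodule.fg_span_iff_fg_span_finset_subset, h] at hM
  obtain ⟨T, hT, hTM⟩ := hM
  choose v hv using fun x : T => (hT x.2).2.2
  have hs : ∀ x : T, ∃ s, ∀ i, x.1 i ∈ ghostLT K G s := by
    intro x
    choose s hs using fun i => exists_mem_ghostLT ((hT x.2).2.1 i)
    exact ⟨Finset.univ.sup s, fun i => ghostLT_mono (Finset.le_sup (Finset.mem_univ i)) (hs i)⟩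
  choose s hs using hs
  obtain ⟨b, hvb, hspan, hind⟩ := exists_independent v _ (fun x : T => x.1) s rfl hs hv
  have hbM : Submodule.span (LeavittPathAlgebra K G) (Set.range b) = M := by
    rw [hspan, hTM]
    congr 1
    ext x
    simp
  let ι := {x : T // b x ≠ 0}
  let f : ((j : ι) → ↥(Submodule.span (LeavittPathAlgebra K G) {vert K G (v j.1)}))
      →ₗ[LeavittPathAlgebra K G] (Fin n → LeavittPathAlgebra K G) :=
    { toFun := fun a => ∑ j, (a j : LeavittPathAlgebra K G) • b j.1
      map_add' := by
        intro a a'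
        simp [add_smul, Finset.sum_add_distrib]
      map_smul' := by
        intro c a
        simp [mul_smul, Finset.smul_sum] }
  have hf : ∀ a, f a = ∑ j, (a j : LeavittPathAlgebra K G) • b j.1 := fun _ => rfl
  have hinj : Function.Injective f := by
    suffices h0 : ∀ a, f a = 0 → a = 0 by
      intro x y hxy
      refine sub_eq_zero.1 (h0 _ ?_)
      exact (LinearMap.map_sub f x y).trans (sub_eq_zero.2 hxy)
    intro a ha
    let a₁ : T → LeavittPathAlgebra K G := fun x => if hx : b x ≠ 0 then (a ⟨x, hx⟩).1 else 0
    have h1 : a₁ = 0 := by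
      refine hind a₁ (fun x => ?_) (fun x hx => ?_) ?_
      · simp only [a₁]
        split_ifs with hx
        · exact mem_span_vert.1 (a ⟨x, hx⟩).2
        · exact zero_mul _
      · simp [a₁, hx]
      · rw [← ha, hf, ← Fintype.sum_subset (s := Finset.univ.filter fun x : T => b x ≠ 0),
          Finset.sum_subtype _ (p := fun x : T => b x ≠ 0) (by simp)]
        · refine Finset.sum_congr rfl fun j _ => ?_
          simp [a₁, j.2]
        · intro x hx
          have : b x ≠ 0 := fun h => hx (by rw [h, smul_zero])
          simpa using this
    funext j
    apply Subtype.ext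
    have := congrFun h1 j.1
    simpa [a₁, j.2] using this
  have hrange : LinearMap.range f = M := by
    apply le_antisymm
    · rintro _ ⟨a, rfl⟩
      rw [hf, ← hbM]
      exact Submodule.sum_mem _ fun j _ => Submodule.smul_mem _ _ (Submodule.subset_span ⟨j.1, rfl⟩)
    · rw [← hbM, Submodule.span_le]
      rintro _ ⟨x, rfl⟩
      by_cases hx : b x = 0
      · rw [hx]
        exact Submodule.zero_mem _
      · refine ⟨Pi.single (⟨x, hx⟩ : ι) ⟨vert K G (v x), Submodule.mem_span_singleton_self _⟩, ?_⟩
        rw [hf, Finset.sum_eq_single (⟨x, hx⟩ : ι)]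
        · rw [Pi.single_eq_same]
          exact hvb x
        · intro j _ hj
          rw [Pi.single_eq_of_ne hj]
          simp
        · intro h
          exact (h (Finset.mem_univ _)).elim
  exact ⟨ι, inferInstance, fun j => v j.1,
    ⟨((LinearEquiv.ofInjective f hinj).trans (LinearEquiv.ofEq _ _ hrange)).symm⟩⟩

end WeakAlgorithm


/-! ### Splitting and regrouping the summands `L v` -/

section Splitting

variable {K : Type} [Field K] {G : FinGraph}

/-- The left ideal `L v` generated by a vertex. -/
abbrev vertIdeal (K : Type) [Field K] (G : FinGraph) (v : G.V) :
    Submodule (LeavittPathAlgebra K G) (LeavittPathAlgebra K G) :=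
  Submodule.span (LeavittPathAlgebra K G) {vert K G v}

/-- `L v ≅ ⨁ L r(e)`, the sum being over the edges `e` emitted by the regular vertex `v`, here
enumerated by `f`: the isomorphism multiplies by the edges, its inverse by the ghost edges. -/
lemma split_vertex {v : G.V} {κ : Type} [Fintype κ] [Nonempty κ] (f : κ → G.E)
    (hf : Function.Injective f) (hs : ∀ k, G.s (f k) = v) (hs' : ∀ e, G.s e = v → ∃ k, f k = e) :
    Nonempty (vertIdeal K G v ≃ₗ[LeavittPathAlgebra K G]
      ((k : κ) → vertIdeal K G (G.r (f k)))) := by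
  classical
  have hv : vert K G v = ∑ k, edge K G (f k) * ghost K G (f k) := by
    rw [vert_eq_sum v ⟨f (Classical.arbitrary κ), hs _⟩]
    symm
    refine Finset.sum_bij (fun k _ => f k) (fun k _ => by simp [hs]) (fun a _ b _ h => hf h)
      (fun e he => ?_) (fun _ _ => rfl)
    obtain ⟨k, hk⟩ := hs' e (by simpa using he)
    exact ⟨k, Finset.mem_univ k, hk⟩
  refine ⟨{ toFun := fun x k => ⟨x.1 * edge K G (f k), mem_span_vert.2 ?_⟩
            invFun := fun y => ⟨∑ k, (y k).1 * ghost K G (f k), mem_span_vert.2 ?_⟩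
            map_add' := ?_
            map_smul' := ?_
            left_inv := ?_
            right_inv := ?_ }⟩
  · rw [mul_assoc, edge_mul_vert]
  · intro x y
    funext k
    exact Subtype.ext (add_mul _ _ _)
  · intro c x
    funext k
    exact Subtype.ext (mul_assoc _ _ _)
  · rw [Finset.sum_mul]
    refine Finset.sum_congr rfl fun k _ => ?_
    rw [mul_assoc, ← hs k, ghost_mul_vert]
  · intro x
    apply Subtype.ext
    simp only [mul_assoc]
    rw [← Finset.mul_sum, ← hv]
    exact mem_span_vert.1 x.2
  · intro y
    funext k
    apply Subtype.ext
    change (∑ k', (y k').1 * ghost K G (f k')) * edge K G (f k) = (y k).1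
    rw [Finset.sum_mul, Finset.sum_eq_single k]
    · rw [mul_assoc, ghost_mul_edge, if_pos rfl]
      exact mem_span_vert.1 (y k).2
    · intro k' _ hk
      rw [mul_assoc, ghost_mul_edge, if_neg (fun h => hk (hf h)), mul_zero]
    · intro h
      exact (h (Finset.mem_univ k)).elim

/-- If `φ` annihilates the vertices `u j`, it annihilates the trace ideal of `⨁ L (u j)`. -/
lemma map_eq_zero_of_annihilates {B : Type} [Ring B] (φ : LeavittPathAlgebra K G →+* B)
    {ι : Type} [Fintype ι] (u : ι → G.V) (h0 : ∀ j, φ (vert K G (u j)) = 0)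
    (h : ((j : ι) → vertIdeal K G (u j)) →ₗ[LeavittPathAlgebra K G] LeavittPathAlgebra K G)
    (x : (j : ι) → vertIdeal K G (u j)) : φ (h x) = 0 := by
  classical
  rw [← Finset.univ_sum_single x, map_sum, map_sum]
  refine Finset.sum_eq_zero fun j _ => ?_
  have hx : Pi.single j (x j) = (x j).1 • (Pi.single j
      ⟨vert K G (u j), Submodule.mem_span_singleton_self _⟩ : (j : ι) → vertIdeal K G (u j)) := by
    rw [← Pi.single_smul]
    congr 1
    exact Subtype.ext (mem_span_vert.1 (x j).2).symm
  rw [hx, map_smul, ← mem_span_vert.1 (x j).2, smul_eq_mul, map_mul, map_mul, h0, mul_zero,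
    zero_mul]

lemma map_eq_zero_of_trace {B : Type} [Ring B] (φ : LeavittPathAlgebra K G →+* B)
    {ι : Type} [Fintype ι] (u : ι → G.V) (h0 : ∀ j, φ (vert K G (u j)) = 0)
    {Q : Type} [AddCommGroup Q] [Module (LeavittPathAlgebra K G) Q]
    (E : Q ≃ₗ[LeavittPathAlgebra K G] ((j : ι) → vertIdeal K G (u j))) {m : ℕ}
    (f : (Fin m → Q) →ₗ[LeavittPathAlgebra K G] LeavittPathAlgebra K G) (q : Fin m → Q) :
    φ (f q) = 0 := by
  rw [← Finset.univ_sum_single q, map_sum, map_sum]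
  refine Finset.sum_eq_zero fun i _ => ?_
  have := map_eq_zero_of_annihilates φ u h0
    ((f.comp (LinearMap.single _ (fun _ => Q) i)).comp E.symm.toLinearMap) (E (q i))
  simpa using this

/-- Unfolding of `IsGenerator`, with the semiring structure of `RingQuot` as scalars. -/
lemma exists_surjection {Q : Type} [AddCommGroup Q] [Module (LeavittPathAlgebra K G) Q]
    (hgen : IsGenerator (LeavittPathAlgebra K G) Q) :
    ∃ (m : ℕ) (f : (Fin m → Q) →ₗ[LeavittPathAlgebra K G] LeavittPathAlgebra K G),
      Function.Surjective f :=
  hgen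

/-- A finitely generated projective module is a finite direct sum of modules `L v`. -/
lemma projective_decomposition (Q : Type) [AddCommGroup Q] [Module (LeavittPathAlgebra K G) Q]
    [Module.Finite (LeavittPathAlgebra K G) Q] [Module.Projective (LeavittPathAlgebra K G) Q] :
    ∃ (ι : Type) (_ : Fintype ι) (v : ι → G.V), Nonempty (Q ≃ₗ[LeavittPathAlgebra K G]
      ((j : ι) → vertIdeal K G (v j))) := by
  obtain ⟨n, f, hf⟩ := Module.Finite.exists_fin' (LeavittPathAlgebra K G) Q
  obtain ⟨g, hg⟩ := Module.projective_lifting_property f LinearMap.id hf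
  have hinj : Function.Injective g := by
    intro x y hxy
    have := congrArg f hxy
    rwa [← LinearMap.comp_apply, ← LinearMap.comp_apply, hg] at this
  have hfg : (LinearMap.range g).FG := by
    rw [LinearMap.range_eq_map]
    exact Module.Finite.fg_top.map g
  obtain ⟨ι, i, v, ⟨e⟩⟩ := fg_submodule_decomposition _ hfg
  exact ⟨ι, i, v, ⟨(LinearEquiv.ofInjective g hinj).trans e⟩⟩

end Splitting

/-! ### Hair extensions of totally looped graphs -/

section Hair

variable {K : Type} [Field K] {F : FinGraph} {n : F.V → ℕ}

/-- All the vertices of a strand of hair generate isomorphic left ideals. -/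
lemma hair_equiv (k : ℕ) : ∀ p : (Σ v : F.V, Fin (n v - 1)), (p.2 : ℕ) = k →
    Nonempty (vertIdeal K (F.hairExtension n) (Sum.inr p) ≃ₗ[
      LeavittPathAlgebra K (F.hairExtension n)]
      vertIdeal K (F.hairExtension n) (Sum.inl p.1)) := by
  induction k with
  | zero =>
    intro p hp
    obtain ⟨e⟩ := split_vertex (K := K) (G := F.hairExtension n) (v := Sum.inr p) (κ := Unit)
      (fun _ => Sum.inr p) (fun _ _ _ => rfl) (fun _ => rfl) (by
        rintro (e | q) h
        · cases h
        · exact ⟨(), congrArg Sum.inr (Sum.inr_injective h).symm⟩)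
    have hr : (F.hairExtension n).r (Sum.inr p) = Sum.inl p.1 := dif_pos hp
    exact ⟨(e.trans (LinearEquiv.funUnique Unit _ _)).trans
      (LinearEquiv.ofEq _ _ (by rw [vertIdeal, hr]))⟩
  | succ k ih =>
    intro p hp
    obtain ⟨e⟩ := split_vertex (K := K) (G := F.hairExtension n) (v := Sum.inr p) (κ := Unit)
      (fun _ => Sum.inr p) (fun _ _ _ => rfl) (fun _ => rfl) (by
        rintro (e | q) h
        · cases h
        · exact ⟨(), congrArg Sum.inr (Sum.inr_injective h).symm⟩)
    have hr : (F.hairExtension n).r (Sum.inr p) =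
        Sum.inr ⟨p.1, ⟨(p.2 : ℕ) - 1, by have := p.2.isLt; omega⟩⟩ := dif_neg (by omega)
    obtain ⟨e'⟩ := ih ⟨p.1, ⟨(p.2 : ℕ) - 1, by have := p.2.isLt; omega⟩⟩ (by simp [hp])
    exact ⟨((e.trans (LinearEquiv.funUnique Unit _ _)).trans
      (LinearEquiv.ofEq _ _ (by rw [vertIdeal, hr]))).trans e'⟩

lemma exists_base_equiv (x : (F.hairExtension n).V) : ∃ v : F.V,
    Nonempty (vertIdeal K (F.hairExtension n) x ≃ₗ[LeavittPathAlgebra K (F.hairExtension n)]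
      vertIdeal K (F.hairExtension n) (Sum.inl v)) := by
  rcases x with v | p
  · exact ⟨v, ⟨LinearEquiv.refl _ _⟩⟩
  · exact ⟨p.1, hair_equiv _ p rfl⟩

/-- In a totally looped graph, `L v` is a sum of modules `L w` in which both `v` itself and
all the vertices reached from `v` by an edge occur. -/
lemma exists_expansion (hF : F.TotallyLooped) (v : F.V) :
    ∃ (κ : Type) (_ : Fintype κ) (w : κ → F.V), (∃ k, w k = v) ∧
      (∀ e, F.s e = v → ∃ k, w k = F.r e) ∧
      Nonempty (vertIdeal K (F.hairExtension n) (Sum.inl v) ≃ₗ[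
        LeavittPathAlgebra K (F.hairExtension n)]
        ((k : κ) → vertIdeal K (F.hairExtension n) (Sum.inl (w k)))) := by
  by_cases hv : F.IsRegular v
  · obtain ⟨e₀, hs₀, hr₀⟩ := hF v hv
    have : Nonempty {e : F.E // F.s e = v} := ⟨⟨e₀, hs₀⟩⟩
    refine ⟨{e : F.E // F.s e = v}, inferInstance, fun e => F.r e.1, ⟨⟨e₀, hs₀⟩, hr₀⟩,
      fun e he => ⟨⟨e, he⟩, rfl⟩, ?_⟩
    exact split_vertex (K := K) (G := F.hairExtension n) (v := Sum.inl v)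
      (fun e : {e : F.E // F.s e = v} => Sum.inl e.1)
      (fun a b h => Subtype.ext (Sum.inl_injective h)) (fun e => congrArg Sum.inl e.2) (by
        rintro (e | q) h
        · exact ⟨⟨e, Sum.inl_injective h⟩, rfl⟩
        · cases h)
  · exact ⟨Unit, inferInstance, fun _ => v, ⟨(), rfl⟩, fun e he => (hv ⟨e, he⟩).elim,
      ⟨(LinearEquiv.funUnique Unit _ _).symm⟩⟩

/-- Expanding the summands repeatedly makes the set of occurring vertices hereditary. The
induction is on the number of vertices that do not occur. -/
lemma exists_hereditary (hF : F.TotallyLooped) {Q : Type} [AddCommGroup Q]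
    [Module (LeavittPathAlgebra K (F.hairExtension n)) Q] (d : ℕ) :
    ∀ (ι : Type) [Fintype ι] (u : ι → F.V), (Finset.univ.image u)ᶜ.card = d →
      Nonempty (Q ≃ₗ[LeavittPathAlgebra K (F.hairExtension n)]
        ((j : ι) → vertIdeal K (F.hairExtension n) (Sum.inl (u j)))) →
      ∃ (ι' : Type) (_ : Fintype ι') (u' : ι' → F.V),
        (∀ e, F.s e ∈ Set.range u' → F.r e ∈ Set.range u') ∧
        Nonempty (Q ≃ₗ[LeavittPathAlgebra K (F.hairExtension n)]
          ((j : ι') → vertIdeal K (F.hairExtension n) (Sum.inl (u' j)))) := by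
  induction d using Nat.strong_induction_on with
  | _ d ih =>
    intro ι _ u hd ⟨E⟩
    by_cases hher : ∀ e, F.s e ∈ Set.range u → F.r e ∈ Set.range u
    · exact ⟨ι, inferInstance, u, hher, ⟨E⟩⟩
    push Not at hher
    obtain ⟨e, ⟨j, hj⟩, he⟩ := hher
    choose κ hκ w hw1 hw2 hw3 using fun j => exists_expansion (K := K) (n := n) hF (u j)
    let u' : (Σ j, κ j) → F.V := fun x => w x.1 x.2
    refine ih _ ?_ (Σ j, κ j) u' rfl
      ⟨(E.trans (LinearEquiv.piCongrRight fun j => (hw3 j).some)).trans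
        (LinearEquiv.piCurry (LeavittPathAlgebra K (F.hairExtension n))
          (fun j (k : κ j) => vertIdeal K (F.hairExtension n) (Sum.inl (w j k)))).symm⟩
    rw [← hd]
    refine Finset.card_lt_card (Finset.compl_ssubset_compl.2 ?_)
    rw [Finset.ssubset_iff_of_subset]
    · obtain ⟨k, hk⟩ := hw2 j e hj.symm
      refine ⟨F.r e, Finset.mem_image.2 ⟨⟨j, k⟩, Finset.mem_univ _, hk⟩, fun h => he ?_⟩
      obtain ⟨i, _, hi⟩ := Finset.mem_image.1 h
      exact ⟨i, hi⟩
    · intro v hv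
      obtain ⟨i, _, hi⟩ := Finset.mem_image.1 hv
      obtain ⟨k, hk⟩ := hw1 i
      exact Finset.mem_image.2 ⟨⟨i, k⟩, Finset.mem_univ _, hk.trans hi⟩

/-- For a hereditary set `H` of vertices of `F`, some ring homomorphism kills exactly those
vertices of `F` that lie in `H`. It comes from the representation supported on the other
vertices together with their hair. -/
lemma exists_killing_hom (hF : F.TotallyLooped) (H : Set F.V)
    (hH : ∀ e, F.s e ∈ H → F.r e ∈ H) :
    ∃ (B : Type) (_ : Ring B) (φ : LeavittPathAlgebra K (F.hairExtension n) →+* B),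
      ∀ v, φ (vert K (F.hairExtension n) (Sum.inl v)) = 0 ↔ v ∈ H := by
  let Z : Set (F.hairExtension n).V :=
    {x | Sum.elim (fun v => v) (fun p : (Σ v : F.V, Fin (n v - 1)) => p.1) x ∉ H}
  have hinr : ∀ p : (Σ v : F.V, Fin (n v - 1)),
      (F.hairExtension n).r (Sum.inr p) ∈ Z ↔ p.1 ∉ H := by
    intro p
    by_cases hp : (p.2 : ℕ) = 0
    · have hr : (F.hairExtension n).r (Sum.inr p) = Sum.inl p.1 := dif_pos hp
      rw [hr]
      exact Iff.rfl
    · have hr : (F.hairExtension n).r (Sum.inr p) =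
          Sum.inr ⟨p.1, ⟨(p.2 : ℕ) - 1, by have := p.2.isLt; omega⟩⟩ := dif_neg hp
      rw [hr]
      exact Iff.rfl
  have hZ1 : ∀ e, (F.hairExtension n).r e ∈ Z → (F.hairExtension n).s e ∈ Z := by
    rintro (e | p) h
    · exact fun h' => h (hH e h')
    · exact (hinr p).1 h
  have hZ2 : ∀ v ∈ Z, (F.hairExtension n).IsRegular v →
      ∃ e, (F.hairExtension n).s e = v ∧ (F.hairExtension n).r e ∈ Z := by
    rintro (v | p) hv ⟨e, he⟩
    · rcases e with e | q
      · obtain ⟨e₀, hs₀, hr₀⟩ := hF v ⟨e, Sum.inl_injective he⟩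
        refine ⟨Sum.inl e₀, congrArg Sum.inl hs₀, ?_⟩
        change F.r e₀ ∉ H
        rw [hr₀]
        exact hv
      · cases he
    · exact ⟨Sum.inr p, rfl, (hinr p).2 hv⟩
  obtain ⟨φ, hφ⟩ := exists_representation K (G := F.hairExtension n) Z hZ1 hZ2
  exact ⟨_, inferInstance, φ.toRingHom, fun v => (hφ (Sum.inl v)).trans not_not⟩

/-- If the vertices occurring in a generator form a hereditary set, every vertex occurs: the
trace ideal of the generator is all of `L`, but a homomorphism killing exactly the occurring
vertices vanishes on it. -/
lemma surjective_of_isGenerator (hF : F.TotallyLooped) {Q : Type} [AddCommGroup Q]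
    [Module (LeavittPathAlgebra K (F.hairExtension n)) Q]
    (hgen : IsGenerator (LeavittPathAlgebra K (F.hairExtension n)) Q)
    {ι : Type} [Fintype ι] (u : ι → F.V)
    (hher : ∀ e, F.s e ∈ Set.range u → F.r e ∈ Set.range u)
    (E : Q ≃ₗ[LeavittPathAlgebra K (F.hairExtension n)]
      ((j : ι) → vertIdeal K (F.hairExtension n) (Sum.inl (u j)))) :
    Function.Surjective u := by
  intro v
  obtain ⟨B, _, φ, hφ⟩ := exists_killing_hom (K := K) (n := n) hF (Set.range u) hher
  obtain ⟨m, f, hf⟩ := exists_surjection hgen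
  obtain ⟨q, hq⟩ := hf (vert K (F.hairExtension n) (Sum.inl v))
  have h0 := map_eq_zero_of_trace φ (fun j => Sum.inl (u j)) (fun j => (hφ _).2 ⟨j, rfl⟩) E f q
  rw [hq] at h0
  exact (hφ v).1 h0

/-- Collecting the summands belonging to the same vertex. -/
lemma exists_multiplicities {Q : Type} [AddCommGroup Q]
    [Module (LeavittPathAlgebra K (F.hairExtension n)) Q]
    {ι : Type} [Fintype ι] (u : ι → F.V) (hu : Function.Surjective u)
    (E : Q ≃ₗ[LeavittPathAlgebra K (F.hairExtension n)]
      ((j : ι) → vertIdeal K (F.hairExtension n) (Sum.inl (u j)))) :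
    ∃ m : F.V → ℕ, (∀ v, 0 < m v) ∧
      Nonempty (Q ≃ₗ[LeavittPathAlgebra K (F.hairExtension n)]
        ((v : F.V) → Fin (m v) → vertIdeal K (F.hairExtension n) (Sum.inl v))) := by
  classical
  let m : F.V → ℕ := fun v => Fintype.card {j // u j = v}
  let c : (Σ v, Fin (m v)) ≃ ι :=
    (Equiv.sigmaCongrRight fun v => (Fintype.equivFin {j // u j = v}).symm).trans
      (Equiv.sigmaFiberEquiv u)
  have hc : ∀ x, u (c x) = x.1 := fun x =>
    ((Fintype.equivFin {j // u j = x.1}).symm x.2).2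
  refine ⟨m, fun v => Fintype.card_pos_iff.2 ?_, ⟨?_⟩⟩
  · obtain ⟨j, hj⟩ := hu v
    exact ⟨⟨j, hj⟩⟩
  · exact ((E.trans (LinearEquiv.piCongrLeft' (LeavittPathAlgebra K (F.hairExtension n))
      (fun j => vertIdeal K (F.hairExtension n) (Sum.inl (u j))) c.symm)).trans
      (LinearEquiv.piCongrRight fun x => LinearEquiv.ofEq
        (vertIdeal K (F.hairExtension n) (Sum.inl (u (c x))))
        (vertIdeal K (F.hairExtension n) (Sum.inl x.1)) (by rw [hc]))).trans
      (LinearEquiv.piCurry (LeavittPathAlgebra K (F.hairExtension n))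
        (fun v (_ : Fin (m v)) => vertIdeal K (F.hairExtension n) (Sum.inl v)))

end Hair

end HairDecomposition

/-- If moreover `Q` is a generator, the decomposition uses all the
vertices of `F`. -/
theorem hair_generator_decomposition (K : Type) [Field K] (F : FinGraph)
    (hF : F.TotallyLooped) (n : F.V → ℕ) (hn : ∀ v, 0 < n v)
    (Q : Type) [AddCommGroup Q] [Module (LeavittPathAlgebra K (F.hairExtension n)) Q]
    [Nontrivial Q] [Module.Finite (LeavittPathAlgebra K (F.hairExtension n)) Q]
    [Module.Projective (LeavittPathAlgebra K (F.hairExtension n)) Q]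
    (hgen : IsGenerator (LeavittPathAlgebra K (F.hairExtension n)) Q) :
    ∃ m : F.V → ℕ, (∀ v, 0 < m v) ∧
      Nonempty (Q ≃ₗ[LeavittPathAlgebra K (F.hairExtension n)]
        ((v : F.V) → Fin (m v) →
          ↥(Submodule.span (LeavittPathAlgebra K (F.hairExtension n))
            {LeavittPathAlgebra.vert K (F.hairExtension n) (Sum.inl v)}))) := by
  obtain ⟨ι, _, v, ⟨E⟩⟩ := HairDecomposition.projective_decomposition (K := K)
    (G := F.hairExtension n) Q
  choose u hu using fun j => HairDecomposition.exists_base_equiv (K := K) (v j)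
  obtain ⟨ι', _, u', hher, ⟨E'⟩⟩ := HairDecomposition.exists_hereditary hF _ ι u rfl
    ⟨E.trans (LinearEquiv.piCongrRight fun j => (hu j).some)⟩
  exact HairDecomposition.exists_multiplicities u'
    (HairDecomposition.surjective_of_isGenerator hF hgen u' hher E') E'
end
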